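/- arXiv:1707.03770 — 10 statements merged into one kernel-verified Lean document; each statement's English description precedes it below -/
import Mathlib

section
/- Let A be an invertible real d×d matrix, let Σ_Δ be a real symmetric positive semidefinite d×d matrix, and let G be a real d×d matrix such that every eigenvalue λ ∈ ℂ of GA satisfies Re(λ) < −1/2. If Σ_G is a symmetric positive semidefinite matrix satisfying the Lyapunov equation (GA + ½I) Σ_G + Σ_G (GA + ½I)ᵀ + G Σ_Δ Gᵀ = 0, then Σ_G − Σ* is positive semidefinite, where Σ* := A⁻¹ Σ_Δ (A⁻¹)ᵀ. Moreover, for the choice G* = −A⁻¹ (for which G*A = −I satisfies the eigenvalue condition), Σ* itself satisfies the Lyapunov equation, so the lower bound Σ* is achieved. -/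
open Matrix

/-!
Write `F = GA` and `X = A⁻¹ Σ_Δ A⁻ᵀ`, so that `G Σ_Δ Gᵀ = F X Fᵀ`. The left-hand side of the
Lyapunov equation at `X` is then the perfect square `(F + 1) X (F + 1)ᵀ`. It vanishes for `F = -1`,
and subtracting it from the equation for `Σ_G` shows that `Y = Σ_G - X` satisfies
`B Y + Y Bᵀ = -(F + 1) X (F + 1)ᵀ ≤ 0`, where `B = F + 1/2` has its spectrum in the open left
half-plane.

That this forces `Y ≥ 0` is Lyapunov's theorem, which holds in every C⋆-algebra: the Cayley
transform `W = (B - 1)⁻¹ (B + 1)` has spectral radius less than one, and `B Y + Y B⋆ ≤ 0` becomes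
`W Y W⋆ ≤ Y`. Iterating, `Wᵏ Y (Wᵏ)⋆ ≤ Y` for all `k`, and the left-hand side tends to zero.
-/

open Filter Topology

section BanachAlgebra

variable {A : Type*} [NormedRing A] [NormedAlgebra ℂ A] [CompleteSpace A]

theorem tendsto_pow_nhds_zero_of_spectralRadius_lt_one {a : A} (ha : spectralRadius ℂ a < 1) :
    Tendsto (fun k : ℕ => a ^ k) atTop (𝓝 0) := by
  obtain ⟨r, har, hr⟩ := ENNReal.lt_iff_exists_nnreal_btwn.mp ha
  have hroot := (spectrum.pow_nnnorm_pow_one_div_tendsto_nhds_spectralRadius a).eventually_lt_const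
    har
  refine squeeze_zero_norm' ?_ (tendsto_pow_atTop_nhds_zero_of_lt_one r.2 (by exact_mod_cast hr))
  filter_upwards [hroot, eventually_gt_atTop 0] with k hk hk0
  have hk0' : (0 : ℝ) < k := by exact_mod_cast hk0
  have hpow := ENNReal.rpow_le_rpow hk.le hk0'.le
  rw [← ENNReal.rpow_mul, one_div_mul_cancel hk0'.ne', ENNReal.rpow_one,
    ENNReal.rpow_natCast] at hpow
  exact_mod_cast hpow

theorem tendsto_pow_nhds_zero_of_forall_spectrum_norm_lt_one {a : A}
    (ha : ∀ z ∈ spectrum ℂ a, ‖z‖ < 1) : Tendsto (fun k : ℕ => a ^ k) atTop (𝓝 0) := by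
  cases subsingleton_or_nontrivial A
  · simpa only [Subsingleton.elim _ (0 : A)] using tendsto_const_nhds
  · exact tendsto_pow_nhds_zero_of_spectralRadius_lt_one
      (spectrum.spectralRadius_lt_of_forall_lt (r := 1) a ha)

end BanachAlgebra

section CayleyTransform

/-- The Cayley transform `(b - 1)⁻¹ (b + 1)`, which turns the Lyapunov inequality
`b x + x b⋆ ≤ 0` into the Stein inequality `c x c⋆ ≤ x`. By the convention for `Ring.inverse`, its
value is `0` when `b - 1` is not invertible. -/
noncomputable def cayleyTransform {R : Type*} [Ring R] (b : R) : R :=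
  Ring.inverse (b - 1) * (b + 1)

theorem sub_one_mul_cayleyTransform {R : Type*} [Ring R] {b : R} (hb : IsUnit (b - 1)) :
    (b - 1) * cayleyTransform b = b + 1 :=
  Ring.mul_inverse_cancel_left _ _ hb

theorem mem_spectrum_cayleyTransform_iff {K R : Type*} [Field K] [NeZero (2 : K)] [Ring R]
    [Algebra K R] {b : R} (hb : IsUnit (b - 1)) {z : K} :
    z ∈ spectrum K (cayleyTransform b) ↔ z ≠ 1 ∧ (z + 1) / (z - 1) ∈ spectrum K b := by
  have hfactor : (b - 1) * (algebraMap K R z - cayleyTransform b) =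
      (z - 1) • b - algebraMap K R (z + 1) := by
    rw [mul_sub, sub_one_mul_cayleyTransform hb, sub_mul, one_mul, ← Algebra.commutes,
      ← Algebra.smul_def, map_add, map_one, sub_smul, one_smul]
    abel
  rw [spectrum.mem_iff, ← hb.mul_left_iff, hfactor]
  obtain rfl | hz := eq_or_ne z 1
  · have htwo : IsUnit (algebraMap K R (1 + 1)) :=
      (isUnit_iff_ne_zero.mpr (by rw [one_add_one_eq_two]; exact two_ne_zero)).map _
    simpa only [sub_self, zero_smul, zero_sub, IsUnit.neg_iff, ne_eq, not_true_eq_false, false_and,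
      iff_false, not_not] using htwo
  · have hz' : z - 1 ≠ 0 := sub_ne_zero.mpr hz
    have hscale : (z - 1) • b - algebraMap K R (z + 1) =
        Units.mk0 (1 - z) (by rwa [← neg_sub, neg_ne_zero]) •
          (algebraMap K R ((z + 1) / (z - 1)) - b) := by
      rw [Units.smul_mk0, Algebra.algebraMap_eq_smul_one, Algebra.algebraMap_eq_smul_one,
        smul_sub, smul_smul]
      match_scalars <;> field_simp <;> ring
    rw [hscale, isUnit_smul_iff, ← spectrum.mem_iff, and_iff_right hz]

theorem re_add_one_div_sub_one_neg_iff {z : ℂ} : ((z + 1) / (z - 1)).re < 0 ↔ ‖z‖ < 1 := by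
  obtain rfl | hz := eq_or_ne z 1
  · simp
  · have hpos : 0 < Complex.normSq (z - 1) := Complex.normSq_pos.mpr (sub_ne_zero.mpr hz)
    rw [Complex.div_re, ← add_div, div_lt_iff₀ hpos, zero_mul, ← sq_lt_one_iff₀ (norm_nonneg z),
      Complex.sq_norm, Complex.normSq_apply]
    simp only [Complex.add_re, Complex.add_im, Complex.sub_re, Complex.sub_im, Complex.one_re,
      Complex.one_im]
    constructor <;> intro h <;> linarith

theorem sub_one_conjugate_sub_cayleyTransform_conjugate {R : Type*} [Ring R] [StarRing R] {b : R}
    (hb : IsUnit (b - 1)) (x : R) :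
    (b - 1) * (x - cayleyTransform b * x * star (cayleyTransform b)) * star (b - 1) =
      -2 * (b * x + x * star b) := by
  calc (b - 1) * (x - cayleyTransform b * x * star (cayleyTransform b)) * star (b - 1)
      = (b - 1) * x * star (b - 1) - (b - 1) * cayleyTransform b * x *
          star ((b - 1) * cayleyTransform b) := by
        rw [star_mul]
        noncomm_ring
    _ = (b - 1) * x * star (b - 1) - (b + 1) * x * star (b + 1) := by
        rw [sub_one_mul_cayleyTransform hb]
    _ = -2 * (b * x + x * star b) := by
        simp only [star_sub, star_add, star_one]
        noncomm_ring

theorem cayleyTransform_conjugate_le {R : Type*} [Ring R] [StarRing R] [PartialOrder R]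
    [StarOrderedRing R] {b x : R} (hb : IsUnit (b - 1)) (h : b * x + x * star b ≤ 0) :
    cayleyTransform b * x * star (cayleyTransform b) ≤ x := by
  rw [← sub_nonneg, ← hb.star_right_conjugate_nonneg_iff,
    sub_one_conjugate_sub_cayleyTransform_conjugate hb, neg_mul, two_mul, neg_nonneg]
  exact add_nonpos h h

end CayleyTransform

section Lyapunov

theorem pow_conjugate_le {R : Type*} [Semiring R] [StarRing R] [PartialOrder R]
    [StarOrderedRing R] {w x : R} (h : w * x * star w ≤ x) (k : ℕ) :
    w ^ k * x * star (w ^ k) ≤ x := by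
  induction k with
  | zero => simp
  | succ k ih =>
    calc w ^ (k + 1) * x * star (w ^ (k + 1))
        = w * (w ^ k * x * star (w ^ k)) * star w := by
          simp only [pow_succ', star_mul, mul_assoc]
      _ ≤ w * x * star w := star_right_conjugate_le_conjugate ih w
      _ ≤ x := h

theorem nonneg_of_conjugate_le_of_tendsto_pow {R : Type*} [Semiring R] [StarRing R] [PartialOrder R]
    [StarOrderedRing R] [TopologicalSpace R] [ContinuousMul R] [ContinuousStar R]
    [ClosedIicTopology R] {w x : R} (h : w * x * star w ≤ x)
    (hw : Tendsto (fun k : ℕ => w ^ k) atTop (𝓝 0)) : 0 ≤ x := by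
  have hlim : Tendsto (fun k : ℕ => w ^ k * x * star (w ^ k)) atTop (𝓝 0) := by
    simpa only [zero_mul] using (hw.mul_const x).mul hw.star
  exact le_of_tendsto' hlim (pow_conjugate_le h)

theorem nonneg_of_lyapunov {A : Type*} [CStarAlgebra A] [PartialOrder A] [StarOrderedRing A]
    {b x : A} (hb : ∀ z ∈ spectrum ℂ b, z.re < 0) (h : b * x + x * star b ≤ 0) : 0 ≤ x := by
  have hunit : IsUnit (b - 1) := by
    have hone : (1 : ℂ) ∉ spectrum ℂ b := fun h => by
      simpa only [Complex.one_re] using (hb 1 h).not_ge zero_le_one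
    simpa only [map_one, IsUnit.sub_iff] using spectrum.notMem_iff.mp hone
  refine nonneg_of_conjugate_le_of_tendsto_pow (cayleyTransform_conjugate_le hunit h) ?_
  refine tendsto_pow_nhds_zero_of_forall_spectrum_norm_lt_one fun z hz => ?_
  exact re_add_one_div_sub_one_neg_iff.mp
    (hb _ ((mem_spectrum_cayleyTransform_iff hunit).mp hz).2)

end Lyapunov

section OptimalCovariance

theorem mul_unit_conjugate_inv_conjugate {M : Type*} [Monoid M] [StarMul M] (a : Mˣ) (g s : M) :
    g * a * (↑a⁻¹ * s * star (↑a⁻¹ : M)) * star (g * a) = g * s * star g := by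
  calc g * a * (↑a⁻¹ * s * star (↑a⁻¹ : M)) * star (g * a)
      = g * (a * ↑a⁻¹) * s * star (g * (a * ↑a⁻¹)) := by simp only [star_mul, mul_assoc]
    _ = g * s * star g := by rw [Units.mul_inv, mul_one]

theorem re_neg_of_mem_spectrum_add_half {A : Type*} [Ring A] [Algebra ℂ A] {f : A}
    (hf : ∀ z ∈ spectrum ℂ f, z.re < -(1 / 2)) {z : ℂ}
    (hz : z ∈ spectrum ℂ (f + (1 / 2 : ℝ) • 1)) : z.re < 0 := by
  have hhalf : (1 / 2 : ℝ) • (1 : A) = algebraMap ℂ A (1 / 2 : ℝ) := by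
    rw [Algebra.algebraMap_eq_smul_one, Complex.coe_smul]
  rw [hhalf, ← spectrum.add_singleton_eq] at hz
  obtain ⟨w, hw, _, rfl, rfl⟩ := hz
  rw [Complex.add_re, Complex.ofReal_re]
  linarith [hf w hw]

variable {R : Type*} [Ring R] [StarRing R] [Algebra ℝ R] [StarModule ℝ R]

theorem lyapunov_residual_eq_conjugate (f x : R) :
    (f + (1 / 2 : ℝ) • 1) * x + x * star (f + (1 / 2 : ℝ) • 1) + f * x * star f =
      (f + 1) * x * star (f + 1) := by
  simp only [star_add, star_smul, star_one, star_trivial, add_mul, mul_add, smul_mul_assoc,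
    mul_smul_comm, one_mul, mul_one]
  module

variable [PartialOrder R] [StarOrderedRing R] {A : Type*} [CStarAlgebra A] [PartialOrder A]
  [StarOrderedRing A]

theorem le_of_lyapunov_eq (φ : R →⋆ₐ[ℝ] A) (hφ : ∀ y, 0 ≤ φ y → 0 ≤ y) {f x y : R} (hx : 0 ≤ x)
    (hf : ∀ z ∈ spectrum ℂ (φ f), z.re < -(1 / 2))
    (hy : (f + (1 / 2 : ℝ) • 1) * y + y * star (f + (1 / 2 : ℝ) • 1) + f * x * star f = 0) :
    x ≤ y := by
  set b := f + (1 / 2 : ℝ) • (1 : R) with hb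
  have hdiff : b * (y - x) + (y - x) * star b = -((f + 1) * x * star (f + 1)) := by
    rw [← lyapunov_residual_eq_conjugate, mul_sub, sub_mul, ← sub_eq_zero, ← hy]
    abel
  have hspec : ∀ z ∈ spectrum ℂ (φ b), z.re < 0 := fun z hz => by
    rw [hb, map_add, map_smul, map_one] at hz
    exact re_neg_of_mem_spectrum_add_half hf hz
  refine sub_nonneg.mp (hφ _ (nonneg_of_lyapunov hspec ?_))
  calc φ b * φ (y - x) + φ (y - x) * star (φ b)
      = -φ ((f + 1) * x * star (f + 1)) := by
        rw [← map_star, ← map_mul, ← map_mul, ← map_add, hdiff, map_neg]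
    _ ≤ 0 := neg_nonpos.mpr (map_nonneg φ (star_right_conjugate_nonneg hx (f + 1)))

/-- `φ` exhibits `R` as a real star algebra inside a C⋆-algebra, where the spectral condition is
read off: `φ = id` gives complex C⋆-algebras, complexification gives real matrices. -/
theorem stmt2_general (φ : R →⋆ₐ[ℝ] A) (hφ : ∀ y, 0 ≤ φ y → 0 ≤ y) (a : Rˣ) (g s : R)
    (hs : 0 ≤ s) (hspec : ∀ z ∈ spectrum ℂ (φ (g * a)), z.re < -(1 / 2))
    (x : R) (hx : (g * a + (1 / 2 : ℝ) • 1) * x + x * star (g * a + (1 / 2 : ℝ) • 1)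
      + g * s * star g = 0) :
    ↑a⁻¹ * s * star (↑a⁻¹ : R) ≤ x ∧
    -(↑a⁻¹ : R) * a = -1 ∧
    (-(↑a⁻¹ : R) * a + (1 / 2 : ℝ) • 1) * (↑a⁻¹ * s * star (↑a⁻¹ : R))
      + (↑a⁻¹ * s * star (↑a⁻¹ : R)) * star (-(↑a⁻¹ : R) * a + (1 / 2 : ℝ) • 1)
      + (-(↑a⁻¹ : R)) * s * star (-(↑a⁻¹ : R)) = 0 := by
  have hinv : -(↑a⁻¹ : R) * a = -1 := by rw [neg_mul, Units.inv_mul]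
  refine ⟨?_, hinv, ?_⟩
  · rw [← mul_unit_conjugate_inv_conjugate a g s] at hx
    exact le_of_lyapunov_eq φ hφ (star_right_conjugate_nonneg hs _) hspec hx
  · rw [← mul_unit_conjugate_inv_conjugate a (-↑a⁻¹) s, lyapunov_residual_eq_conjugate, hinv,
      neg_add_cancel, zero_mul, zero_mul]

end OptimalCovariance

section RealMatrix

open scoped ComplexOrder MatrixOrder

variable {n : Type*}

theorem posSemidef_of_map_ofReal {M : Matrix n n ℝ} (h : (M.map Complex.ofReal).PosSemidef) :
    M.PosSemidef := by
  refine ⟨map_injective Complex.ofReal_injective ?_, fun x => ?_⟩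
  · have hstar (r : ℝ) : Complex.ofReal (star r) = star (Complex.ofReal r) :=
      (Complex.conj_ofReal r).symm
    simpa only [IsHermitian, ← conjTranspose_map Complex.ofReal hstar] using h.isHermitian
  · have hsum := h.2 (x.mapRange Complex.ofReal Complex.ofReal_zero)
    rw [Finsupp.sum_mapRange_index (by simp)] at hsum
    simp only [Finsupp.sum_mapRange_index, mul_zero, map_apply, Complex.star_def,
      Complex.conj_ofReal, implies_true] at hsum
    simp only [Finsupp.sum, star_trivial] at hsum ⊢
    exact_mod_cast hsum

variable [Fintype n] [DecidableEq n]

/-- Extension of scalars from real to complex matrices, which realises the real matrices as a real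
star subalgebra of a complex C⋆-algebra. -/
noncomputable def complexification : Matrix n n ℝ →⋆ₐ[ℝ] Matrix n n ℂ :=
  { Complex.ofRealAm.mapMatrix with
    map_star' M := by
      ext i j
      simp }

theorem complexification_apply (M : Matrix n n ℝ) :
    complexification M = M.map Complex.ofReal :=
  rfl

theorem nonneg_of_complexification_nonneg {M : Matrix n n ℝ} (h : 0 ≤ complexification M) :
    0 ≤ M := by
  rw [complexification_apply, nonneg_iff_posSemidef] at h
  exact (posSemidef_of_map_ofReal h).nonneg

theorem forall_mem_spectrum_of_forall_mulVec_eq_smul {K : Type*} [Field K] {M : Matrix n n K}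
    {p : K → Prop} (h : ∀ (z : K) (v : n → K), v ≠ 0 → M *ᵥ v = z • v → p z) :
    ∀ z ∈ spectrum K M, p z := fun z hz => by
  rw [← spectrum_toLin', ← Module.End.hasEigenvalue_iff_mem_spectrum] at hz
  obtain ⟨v, hv⟩ := hz.exists_hasEigenvector
  exact h z v hv.2 (by simpa only [toLin'_apply] using hv.apply_eq_smul)

end RealMatrix

/-- Optimality of the asymptotic covariance: any PSD solution `Σ_G` of the
Lyapunov equation dominates `Σ* = A⁻¹ Σ_Δ A⁻ᵀ`, and the bound is achieved by the
gain `G* = -A⁻¹` (for which `G*A = -I`), i.e. `Σ*` solves the corresponding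
Lyapunov equation. -/
theorem stmt2 {d : ℕ}
    (A G SigmaDelta : Matrix (Fin d) (Fin d) ℝ)
    (hA : IsUnit A)
    (hSigmaDelta : SigmaDelta.PosSemidef)
    (heig : ∀ (lam : ℂ) (v : Fin d → ℂ), v ≠ 0 →
      ((G * A).map (Complex.ofReal)).mulVec v = lam • v → lam.re < -(1/2 : ℝ))
    (SigmaG : Matrix (Fin d) (Fin d) ℝ)
    (hSigmaG : SigmaG.PosSemidef)
    (hLyap : (G * A + (1/2 : ℝ) • 1) * SigmaG + SigmaG * (G * A + (1/2 : ℝ) • 1)ᵀ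
      + G * SigmaDelta * Gᵀ = 0) :
    (SigmaG - A⁻¹ * SigmaDelta * (A⁻¹)ᵀ).PosSemidef ∧
    (-A⁻¹) * A = -1 ∧
    ((-A⁻¹) * A + (1/2 : ℝ) • 1) * (A⁻¹ * SigmaDelta * (A⁻¹)ᵀ)
      + (A⁻¹ * SigmaDelta * (A⁻¹)ᵀ) * ((-A⁻¹) * A + (1/2 : ℝ) • 1)ᵀ
      + (-A⁻¹) * SigmaDelta * (-A⁻¹)ᵀ = 0 := by
  obtain ⟨A, rfl⟩ := hA
  open scoped MatrixOrder ComplexOrder Matrix.Norms.L2Operator in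
  simpa only [le_iff, star_eq_conjTranspose, conjTranspose_eq_transpose_of_trivial,
    coe_units_inv] using stmt2_general (A := Matrix (Fin d) (Fin d) ℂ) complexification
      (fun _ => nonneg_of_complexification_nonneg) A G SigmaDelta hSigmaDelta.nonneg
      (forall_mem_spectrum_of_forall_mulVec_eq_smul heig) SigmaG
      (by simpa only [star_eq_conjTranspose, conjTranspose_eq_transpose_of_trivial] using hLyap)
end

section
/- Let d ≥ 1, let (A_n)_{n≥1} be a sequence of real d×d matrices and (b_n)_{n≥1} a sequence of vectors in ℝ^d. Define the running averages Â_n = (1/n) Σ_{i=1}^n A_i and b̂_n = (1/n) Σ_{i=1}^n b_i, and suppose Â_n is invertible for every n ≥ 1. Let θ_0 ∈ ℝ^d be arbitrary and define recursively θ_{n+1} = θ_n − (1/(n+1)) Â_{n+1}⁻¹ (A_{n+1} θ_n − b_{n+1}) for n ≥ 0. Then θ_n = Â_n⁻¹ b̂_n for every n ≥ 1. -/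
open Matrix Filter

/-!
The running averages obey `Â_{n+1} = Â_n + (A_{n+1} - Â_n) / (n + 1)`, and likewise for `b̂`.
For any averages updated in this way, with an arbitrary step-size `α`, the matrix gain `Â_{n+1}⁻¹`
is exactly what makes the Newton-Raphson step preserve the equation `Â_n θ_n = b̂_n`:
`Â_{n+1} θ_{n+1} = Â_{n+1} θ_n - α (A_{n+1} θ_n - b_{n+1})`, and the right-hand side is
`(1 - α) Â_n θ_n + α b_{n+1} = (1 - α) b̂_n + α b_{n+1} = b̂_{n+1}`.
At `n = 0` both averages are zero, so the equation holds whatever `θ_0` is.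
-/

section RunningAverage

variable (K : Type*) {M : Type*} [DivisionRing K] [AddCommGroup M] [Module K M]

/-- The average of `x 1, …, x n`, the estimate of a mean from the first `n` observations.
Sequences are indexed from `1`, and the empty average at `n = 0` is `0`. -/
def runningAverage (x : ℕ → M) (n : ℕ) : M :=
  (n : K)⁻¹ • ∑ i ∈ Finset.Icc 1 n, x i

theorem runningAverage_zero (x : ℕ → M) : runningAverage K x 0 = 0 := by
  simp [runningAverage]

theorem natCast_smul_runningAverage [CharZero K] (x : ℕ → M) (n : ℕ) :
    (n : K) • runningAverage K x n = ∑ i ∈ Finset.Icc 1 n, x i := by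
  rcases eq_or_ne n 0 with rfl | hn
  · simp
  · exact smul_inv_smul₀ (Nat.cast_ne_zero.mpr hn) _

theorem runningAverage_succ [CharZero K] (x : ℕ → M) (n : ℕ) :
    runningAverage K x (n + 1) =
      runningAverage K x n + (1 / (n + 1 : K)) • (x (n + 1) - runningAverage K x n) := by
  have hn : (n + 1 : K) ≠ 0 := n.cast_add_one_ne_zero
  refine smul_right_injective M hn ?_
  calc (n + 1 : K) • runningAverage K x (n + 1)
      = ∑ i ∈ Finset.Icc 1 (n + 1), x i := by
        rw [← Nat.cast_add_one, natCast_smul_runningAverage]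
    _ = (n : K) • runningAverage K x n + x (n + 1) := by
        rw [Finset.sum_Icc_succ_top n.succ_pos, natCast_smul_runningAverage]
    _ = (n + 1 : K) • (runningAverage K x n +
          (1 / (n + 1 : K)) • (x (n + 1) - runningAverage K x n)) := by
        rw [smul_add, one_div, smul_inv_smul₀ hn, add_smul, one_smul]
        abel

end RunningAverage

section NewtonRaphson

variable {R ι : Type*} [CommRing R] [Fintype ι] [DecidableEq ι]

theorem mulVec_newtonRaphson_step {Ahat : Matrix ι ι R} {bhat θ : ι → R}
    (hθ : Ahat *ᵥ θ = bhat) (α : R) (A : Matrix ι ι R) (b : ι → R)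
    (hinv : IsUnit (Ahat + α • (A - Ahat))) :
    (Ahat + α • (A - Ahat)) *ᵥ (θ - α • (Ahat + α • (A - Ahat))⁻¹ *ᵥ (A *ᵥ θ - b)) =
      bhat + α • (b - bhat) := by
  have hgain (v : ι → R) :
      (Ahat + α • (A - Ahat)) *ᵥ (Ahat + α • (A - Ahat))⁻¹ *ᵥ v = v := by
    rw [mulVec_mulVec, mul_nonsing_inv _ ((isUnit_iff_isUnit_det _).mp hinv), one_mulVec]
  calc (Ahat + α • (A - Ahat)) *ᵥ (θ - α • (Ahat + α • (A - Ahat))⁻¹ *ᵥ (A *ᵥ θ - b))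
      = (Ahat + α • (A - Ahat)) *ᵥ θ - α • (A *ᵥ θ - b) := by
        rw [mulVec_sub, mulVec_smul, hgain]
    _ = bhat + α • (A *ᵥ θ - bhat) - α • (A *ᵥ θ - b) := by
        rw [add_mulVec, smul_mulVec, sub_mulVec, hθ]
    _ = bhat + α • (b - bhat) := by
        module

theorem mulVec_newtonRaphson {α : ℕ → R} {A Ahat : ℕ → Matrix ι ι R} {b bhat θ : ℕ → ι → R}
    (hAhat : ∀ n, Ahat (n + 1) = Ahat n + α n • (A (n + 1) - Ahat n))
    (hbhat : ∀ n, bhat (n + 1) = bhat n + α n • (b (n + 1) - bhat n))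
    (hinv : ∀ n, IsUnit (Ahat (n + 1)))
    (hrec : ∀ n, θ (n + 1) =
      θ n - α n • (Ahat (n + 1))⁻¹ *ᵥ (A (n + 1) *ᵥ θ n - b (n + 1)))
    (hzero : Ahat 0 *ᵥ θ 0 = bhat 0) (n : ℕ) :
    Ahat n *ᵥ θ n = bhat n := by
  induction n with
  | zero => exact hzero
  | succ n ih =>
    rw [hrec, hbhat, hAhat]
    exact mulVec_newtonRaphson_step ih (α n) _ _ (hAhat n ▸ hinv n)

end NewtonRaphson

theorem stmt3_general {K ι : Type*} [Field K] [CharZero K] [Fintype ι] [DecidableEq ι]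
    {A : ℕ → Matrix ι ι K} {b θ : ℕ → ι → K}
    (hinv : ∀ n, 1 ≤ n → IsUnit (runningAverage K A n))
    (hrec : ∀ n : ℕ, θ (n + 1) = θ n - (1 / (n + 1 : K)) •
      (runningAverage K A (n + 1))⁻¹ *ᵥ (A (n + 1) *ᵥ θ n - b (n + 1)))
    (n : ℕ) (hn : 1 ≤ n) :
    θ n = (runningAverage K A n)⁻¹ *ᵥ runningAverage K b n := by
  have hzero : runningAverage K A 0 *ᵥ θ 0 = runningAverage K b 0 := by
    rw [runningAverage_zero, runningAverage_zero, zero_mulVec]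
  have hθ : runningAverage K A n *ᵥ θ n = runningAverage K b n :=
    mulVec_newtonRaphson (runningAverage_succ K A) (runningAverage_succ K b)
      (fun k ↦ hinv (k + 1) k.succ_pos) hrec hzero n
  rw [← hθ, mulVec_mulVec, nonsing_inv_mul _ ((isUnit_iff_isUnit_det _).mp (hinv n hn)),
    one_mulVec]

/-- Stochastic Newton-Raphson recursion with step-size `α_n = 1/n` coincides with the
direct (running-average) estimates `θ_n = Â_n⁻¹ b̂_n`. -/
theorem stmt3 {d : ℕ} (hd : 1 ≤ d)
    (A : ℕ → Matrix (Fin d) (Fin d) ℝ) (b : ℕ → Fin d → ℝ)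
    (Ahat : ℕ → Matrix (Fin d) (Fin d) ℝ) (bhat : ℕ → Fin d → ℝ)
    (hAhat : ∀ n, Ahat n = (n : ℝ)⁻¹ • ∑ i ∈ Finset.Icc 1 n, A i)
    (hbhat : ∀ n, bhat n = (n : ℝ)⁻¹ • ∑ i ∈ Finset.Icc 1 n, b i)
    (hinv : ∀ n, 1 ≤ n → IsUnit (Ahat n))
    (θ : ℕ → Fin d → ℝ)
    (hrec : ∀ n : ℕ, θ (n + 1) = θ n - (1 / (n + 1 : ℝ)) •
      (Ahat (n + 1))⁻¹.mulVec ((A (n + 1)).mulVec (θ n) - b (n + 1))) :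
    ∀ n, 1 ≤ n → θ n = (Ahat n)⁻¹.mulVec (bhat n) := by
  obtain ⟨rfl, rfl⟩ : Ahat = runningAverage ℝ A ∧ bhat = runningAverage ℝ b :=
    ⟨funext hAhat, funext hbhat⟩
  exact stmt3_general hinv hrec
end

section
/- Let d ≥ 1, β ∈ (0,1), λ ∈ [0,1]. Let X be a set, (x_n)_{n≥0} a sequence in X, ψ : X → ℝ^d, and c : X → ℝ. Let ζ_0 ∈ ℝ^d and define ζ_{n+1} = λβ ζ_n + ψ(x_{n+1}) for n ≥ 0. Set A_i = ζ_{i−1} (β ψ(x_i) − ψ(x_{i−1}))ᵀ for i ≥ 1. Let Â_1 ∈ ℝ^{d×d} be arbitrary, and define recursively, with α_n = 1/n: Â_{n+1} = Â_n + α_{n+1}(A_{n+1} − Â_n) for n ≥ 1, and, starting from θ_0 = 0, θ_{n+1} = θ_n − α_{n+1} Â_{n+1}⁻¹ ζ_n d_{n+1} where d_{n+1} = c(x_n) + (β ψ(x_{n+1}) − ψ(x_n))ᵀ θ_n, for n ≥ 0 (assuming each Â_n, n ≥ 1, is invertible). Then for every n ≥ 1: Â_n = (1/n)(Σ_{i=1}^n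 A_i + ℰ_1) with ℰ_1 = Â_1 − A_1, and θ_n = Â_n⁻¹ b̂_n, where b̂_n = −(1/n) Σ_{i=1}^n ζ_{i−1} c(x_{i−1}). -/
open Matrix

/-!
If `Â_n` is a running average of `A_n` and `θ_n` follows the Newton–Raphson recursion for
`A_n θ = b_n` with gain `Â_n⁻¹`, then in the update of `Â_{n+1} θ_{n+1}` the terms
`A_{n+1} θ_n` cancel: `Â_n θ_n` is itself a running average, namely of `b_n`. Both estimates
therefore have the same closed form. For SNR-TD(λ), `A_{n+1}` has rank one and its range is spanned
by `ζ_n`, so with `b_{n+1} = -c(x_n) ζ_n` the residual `A_{n+1} θ_n - b_{n+1}` is `d_{n+1} ζ_n`.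
-/

/-- `a` tracks the averages of `x` with step size `1 / n`. The recursion starts at index `1`, where
`a 1` is arbitrary rather than `x 1`, so that `a` may carry an initial error. -/
def IsRunningAverage (K : Type*) {M : Type*} [DivisionRing K] [AddCommGroup M] [Module K M]
    (x a : ℕ → M) : Prop :=
  ∀ n : ℕ, 1 ≤ n → a (n + 1) = a n + (1 / (n + 1 : K)) • (x (n + 1) - a n)

namespace IsRunningAverage

variable {K M : Type*} [DivisionRing K] [CharZero K] [AddCommGroup M] [Module K M] {x a : ℕ → M}

theorem natCast_smul_eq (h : IsRunningAverage K x a) {n : ℕ} (hn : 1 ≤ n) :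
    (n : K) • a n = ∑ i ∈ Finset.Icc 1 n, x i + (a 1 - x 1) := by
  induction n, hn using Nat.le_induction with
  | base => simp
  | succ n hn ih =>
    have h_step : ((n + 1 : ℕ) : K) • a (n + 1) = (n : K) • a n + x (n + 1) := by
      rw [h n hn, Nat.cast_add_one, smul_add, smul_smul,
        mul_one_div_cancel n.cast_add_one_ne_zero, add_smul, one_smul, one_smul]
      abel
    rw [h_step, ih, Finset.sum_Icc_succ_top (by omega)]
    abel

theorem eq_inv_smul (h : IsRunningAverage K x a) {n : ℕ} (hn : 1 ≤ n) :
    a n = (n : K)⁻¹ • (∑ i ∈ Finset.Icc 1 n, x i + (a 1 - x 1)) := by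
  rw [← h.natCast_smul_eq hn, inv_smul_smul₀ (Nat.cast_ne_zero.2 (by omega))]

end IsRunningAverage

/-- The stochastic Newton–Raphson (SNR) recursion for the linear equations `A n *ᵥ θ = b n`, with
gain matrices `Ahat n` and step size `1 / n`. The recursion says what is intended
only for invertible `Ahat n`: elsewhere the junk value `(Ahat n)⁻¹ = 0` leaves `θ` unchanged. -/
def IsLinearSNR {K ι : Type*} [Field K] [Fintype ι] [DecidableEq ι]
    (A Ahat : ℕ → Matrix ι ι K) (b θ : ℕ → ι → K) : Prop :=
  ∀ n : ℕ, θ (n + 1) =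
    θ n - (1 / (n + 1 : K)) • ((Ahat (n + 1))⁻¹ *ᵥ (A (n + 1) *ᵥ θ n - b (n + 1)))

section LinearSNR

variable {K ι : Type*} [Field K] [Fintype ι] [DecidableEq ι]
  {A Ahat : ℕ → Matrix ι ι K} {b θ : ℕ → ι → K}

namespace IsLinearSNR

theorem mulVec_succ (h : IsLinearSNR A Ahat b θ) {n : ℕ} (hinv : IsUnit (Ahat (n + 1))) :
    Ahat (n + 1) *ᵥ θ (n + 1) =
      Ahat (n + 1) *ᵥ θ n - (1 / (n + 1 : K)) • (A (n + 1) *ᵥ θ n - b (n + 1)) := by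
  rw [h n, mulVec_sub, mulVec_smul, mulVec_mulVec,
    mul_nonsing_inv _ ((isUnit_iff_isUnit_det _).1 hinv), one_mulVec]

theorem mulVec_one_sub (h : IsLinearSNR A Ahat b θ) (hinv : IsUnit (Ahat 1)) :
    Ahat 1 *ᵥ θ 1 - b 1 = (Ahat 1 - A 1) *ᵥ θ 0 := by
  rw [h.mulVec_succ hinv, Nat.cast_zero, zero_add, zero_add, div_one, one_smul, sub_mulVec]
  abel

theorem isRunningAverage_mulVec (h : IsLinearSNR A Ahat b θ) (hA : IsRunningAverage K A Ahat)
    (hinv : ∀ n, 1 ≤ n → IsUnit (Ahat n)) :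
    IsRunningAverage K b fun n ↦ Ahat n *ᵥ θ n := by
  intro n hn
  calc Ahat (n + 1) *ᵥ θ (n + 1)
      = Ahat (n + 1) *ᵥ θ n - (1 / (n + 1 : K)) • (A (n + 1) *ᵥ θ n - b (n + 1)) :=
        h.mulVec_succ (hinv (n + 1) n.succ_pos)
    _ = Ahat n *ᵥ θ n + (1 / (n + 1 : K)) • (A (n + 1) *ᵥ θ n - Ahat n *ᵥ θ n) -
          (1 / (n + 1 : K)) • (A (n + 1) *ᵥ θ n - b (n + 1)) := by
        rw [hA n hn, add_mulVec, smul_mulVec, sub_mulVec]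
    _ = Ahat n *ᵥ θ n + (1 / (n + 1 : K)) • (b (n + 1) - Ahat n *ᵥ θ n) := by
        module

theorem eq_inv_mulVec [CharZero K] (h : IsLinearSNR A Ahat b θ) (hA : IsRunningAverage K A Ahat)
    (hinv : ∀ n, 1 ≤ n → IsUnit (Ahat n)) {n : ℕ} (hn : 1 ≤ n) :
    θ n = (Ahat n)⁻¹ *ᵥ
      ((n : K)⁻¹ • (∑ i ∈ Finset.Icc 1 n, b i + (Ahat 1 - A 1) *ᵥ θ 0)) := by
  rw [← h.mulVec_one_sub (hinv 1 le_rfl),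
    ← (h.isRunningAverage_mulVec hA hinv).eq_inv_smul hn, mulVec_mulVec,
    nonsing_inv_mul _ ((isUnit_iff_isUnit_det _).1 (hinv n hn)), one_mulVec]

end IsLinearSNR

theorem isLinearSNR_of_eq_vecMulVec {ζ w : ℕ → ι → K} {r : ℕ → K}
    (hA : ∀ i, 1 ≤ i → A i = vecMulVec (ζ (i - 1)) (w i))
    (hθ : ∀ n : ℕ, θ (n + 1) = θ n - (1 / (n + 1 : K)) •
      ((r n + w (n + 1) ⬝ᵥ θ n) • ((Ahat (n + 1))⁻¹ *ᵥ ζ n))) :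
    IsLinearSNR A Ahat (fun i ↦ -(r (i - 1) • ζ (i - 1))) θ := by
  intro n
  have h_residual : A (n + 1) *ᵥ θ n - -(r n • ζ n) = (r n + w (n + 1) ⬝ᵥ θ n) • ζ n := by
    rw [hA (n + 1) n.succ_pos, vecMulVec_mulVec, Nat.add_sub_cancel, op_smul_eq_smul,
      sub_neg_eq_add, add_comm, add_smul]
  simp only [hθ n, Nat.add_sub_cancel, h_residual, mulVec_smul]

end LinearSNR

theorem stmt4_general {K ι : Type*} [Field K] [CharZero K] [Fintype ι] [DecidableEq ι]
    {ζ w : ℕ → ι → K} {r : ℕ → K} {A Ahat : ℕ → Matrix ι ι K} {θ : ℕ → ι → K}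
    (hA : ∀ i, 1 ≤ i → A i = vecMulVec (ζ (i - 1)) (w i))
    (hAhat : IsRunningAverage K A Ahat) (hinv : ∀ n, 1 ≤ n → IsUnit (Ahat n))
    (hθ : ∀ n : ℕ, θ (n + 1) = θ n - (1 / (n + 1 : K)) •
      ((r n + w (n + 1) ⬝ᵥ θ n) • ((Ahat (n + 1))⁻¹ *ᵥ ζ n)))
    {n : ℕ} (hn : 1 ≤ n) :
    Ahat n = (n : K)⁻¹ • (∑ i ∈ Finset.Icc 1 n, A i + (Ahat 1 - A 1)) ∧
      θ n = (Ahat n)⁻¹ *ᵥ ((n : K)⁻¹ •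
        (-∑ i ∈ Finset.Icc 1 n, r (i - 1) • ζ (i - 1) + (Ahat 1 - A 1) *ᵥ θ 0)) := by
  refine ⟨hAhat.eq_inv_smul hn, ?_⟩
  rw [← Finset.sum_neg_distrib]
  exact (isLinearSNR_of_eq_vecMulVec hA hθ).eq_inv_mulVec hAhat hinv hn

/-- The SNR-TD(λ) algorithm coincides with the LSTD(λ)-type direct estimates:
`Â_n = n⁻¹(Σ_{i=1}^n A_i + ℰ_1)` with `ℰ_1 = Â_1 - A_1`, and `θ_n = Â_n⁻¹ b̂_n`. -/
theorem stmt4 {d : ℕ} (hd : 1 ≤ d) {X : Type*}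
    (β lam : ℝ) (hβ : β ∈ Set.Ioo (0 : ℝ) 1) (hlam : lam ∈ Set.Icc (0 : ℝ) 1)
    (xs : ℕ → X) (ψ : X → Fin d → ℝ) (c : X → ℝ)
    (ζ : ℕ → Fin d → ℝ)
    (hζ : ∀ n : ℕ, ζ (n + 1) = (lam * β) • ζ n + ψ (xs (n + 1)))
    (A : ℕ → Matrix (Fin d) (Fin d) ℝ)
    (hA : ∀ i : ℕ, 1 ≤ i →
      A i = Matrix.vecMulVec (ζ (i - 1)) (β • ψ (xs i) - ψ (xs (i - 1))))
    (Ahat : ℕ → Matrix (Fin d) (Fin d) ℝ)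
    (hAhat : ∀ n : ℕ, 1 ≤ n → Ahat (n + 1) = Ahat n + (1 / (n + 1 : ℝ)) • (A (n + 1) - Ahat n))
    (hinv : ∀ n : ℕ, 1 ≤ n → IsUnit (Ahat n))
    (θ : ℕ → Fin d → ℝ) (hθ0 : θ 0 = 0)
    (hθ : ∀ n : ℕ, θ (n + 1) = θ n - (1 / (n + 1 : ℝ)) •
      ((c (xs n) + (β • ψ (xs (n + 1)) - ψ (xs n)) ⬝ᵥ θ n) •
        (Ahat (n + 1))⁻¹.mulVec (ζ n))) :
    ∀ n : ℕ, 1 ≤ n →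
      Ahat n = (n : ℝ)⁻¹ • ((∑ i ∈ Finset.Icc 1 n, A i) + (Ahat 1 - A 1)) ∧
      θ n = (Ahat n)⁻¹.mulVec
        (-(n : ℝ)⁻¹ • ∑ i ∈ Finset.Icc 1 n, c (xs (i - 1)) • ζ (i - 1)) := by
  intro n hn
  simpa [hθ0] using stmt4_general (w := fun i ↦ β • ψ (xs i) - ψ (xs (i - 1))) hA hAhat hinv hθ hn
end

section
/- Let X and U be finite nonempty sets, P a matrix with rows indexed by X×U and columns by X having nonnegative entries and each row summing to 1, and β ∈ (0,1). For every ς : X×U → ℝ there exists exactly one q : X×U → ℝ satisfying q(x,u) = ς(x,u) + β Σ_{x'} P((x,u),x') · min_{u'} q(x',u') for all (x,u); denote it Q(ς). The resulting map Q : ℝ^{X×U} → ℝ^{X×U} is a bijection, is monotone (if ς₁(x,u) ≤ ς₂(x,u) for all (x,u) then Q(ς₁)(x,u) ≤ Q(ς₂)(x,u) for all (x,u)), and is concave (for every t ∈ [0,1], Q(t ς₁ + (1−t) ς₂)(x,u) ≥ t Q(ς₁)(x,u) + (1−t) Q(ς₂)(x,u) for all (x,u)). -/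
/-!
The map `q ↦ q - T q`, where `T q` is the discounted expected minimum of `q`, recovers the cost from
its Q-function. Since `T` is a contraction, Banach's theorem makes this map bijective, and the
Q-function operator is its inverse. Monotonicity and concavity of this inverse both follow from one
comparison principle: a subsolution of a monotone contraction lies below the fixed point, being the
start of an increasing sequence of iterates which converges to it.
-/

open Function Set
open scoped NNReal Matrix

section ResolventOfContraction

variable {E : Type*} [NormedAddCommGroup E] {K : ℝ≥0} {T : E → E}

theorem contractingWith_const_add (hT : ContractingWith K T) (c : E) :
    ContractingWith K fun q => c + T q :=
  ⟨hT.1, fun q q' => (edist_add_left c (T q) (T q')).trans_le (hT.2 q q')⟩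

theorem bijective_sub_self_apply [CompleteSpace E] (hT : ContractingWith K T) :
    Bijective fun q => q - T q := by
  refine (bijective_iff_existsUnique _).2 fun c => ?_
  have hc := contractingWith_const_add hT c
  have isFixedPt_iff : ∀ q, q - T q = c ↔ IsFixedPt (fun q => c + T q) q :=
    fun _ => sub_eq_iff_eq_add.trans eq_comm
  simp only [isFixedPt_iff]
  exact ⟨hc.fixedPoint, hc.fixedPoint_isFixedPt, fun _ => hc.fixedPoint_unique⟩

theorem bijective_solution [CompleteSpace E] {Q : E → E} (hT : ContractingWith K T)
    (hQ : ∀ c, Q c = c + T (Q c)) : Bijective Q := by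
  have hright : RightInverse Q fun q => q - T q := fun c => sub_eq_of_eq_add (hQ c)
  have hleft : LeftInverse Q fun q => q - T q :=
    hright.leftInverse_of_injective (bijective_sub_self_apply hT).injective
  exact bijective_iff_has_inverse.2 ⟨_, hright, hleft⟩

theorem le_of_le_map_of_isFixedPt {α : Type*} [MetricSpace α] [CompleteSpace α] [Preorder α]
    [OrderClosedTopology α] {f : α → α} (hf : ContractingWith K f) (hmono : Monotone f)
    {x y : α} (hx : x ≤ f x) (hy : IsFixedPt f y) : x ≤ y := by
  have : Nonempty α := ⟨x⟩
  rw [hf.fixedPoint_unique hy]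
  exact (hmono.monotone_iterate_of_le_map hx).ge_of_tendsto (hf.tendsto_iterate_fixedPoint x) 0

variable [CompleteSpace E] [PartialOrder E] [IsOrderedAddMonoid E] [OrderClosedTopology E]
  {Q : E → E}

theorem le_solution_of_le_add (hT : ContractingWith K T) (hmono : Monotone T)
    (hQ : ∀ c, Q c = c + T (Q c)) {c q : E} (hq : q ≤ c + T q) : q ≤ Q c :=
  le_of_le_map_of_isFixedPt (contractingWith_const_add hT c) (hmono.const_add c) hq (hQ c).symm

theorem monotone_solution (hT : ContractingWith K T) (hmono : Monotone T)
    (hQ : ∀ c, Q c = c + T (Q c)) : Monotone Q := fun c₁ c₂ hc =>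
  le_solution_of_le_add hT hmono hQ <|
    calc Q c₁ = c₁ + T (Q c₁) := hQ c₁
      _ ≤ c₂ + T (Q c₁) := by gcongr

theorem concaveOn_solution [Module ℝ E] (hT : ContractingWith K T) (hmono : Monotone T)
    (hconc : ConcaveOn ℝ univ T) (hQ : ∀ c, Q c = c + T (Q c)) : ConcaveOn ℝ univ Q := by
  refine ⟨convex_univ, fun c₁ _ c₂ _ s t hs ht hst => le_solution_of_le_add hT hmono hQ ?_⟩
  calc s • Q c₁ + t • Q c₂
      = s • (c₁ + T (Q c₁)) + t • (c₂ + T (Q c₂)) := by rw [← hQ c₁, ← hQ c₂]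
    _ = (s • c₁ + t • c₂) + (s • T (Q c₁) + t • T (Q c₂)) := by module
    _ ≤ (s • c₁ + t • c₂) + T (s • Q c₁ + t • Q c₂) := by
        gcongr
        exact hconc.2 trivial trivial hs ht hst

theorem stmt5_general [Module ℝ E] (hT : ContractingWith K T) (hmono : Monotone T)
    (hconc : ConcaveOn ℝ univ T) :
    (∀ ς, ∃! q, q = ς + T q) ∧
    ∀ Q : E → E, (∀ ς, Q ς = ς + T (Q ς)) →
      Bijective Q ∧
      (∀ ς₁ ς₂, ς₁ ≤ ς₂ → Q ς₁ ≤ Q ς₂) ∧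
      (∀ ς₁ ς₂, ∀ t ∈ Icc (0 : ℝ) 1,
        t • Q ς₁ + (1 - t) • Q ς₂ ≤ Q (t • ς₁ + (1 - t) • ς₂)) := by
  refine ⟨fun ς => ?_, fun Q hQ =>
    ⟨bijective_solution hT hQ, fun _ _ h => monotone_solution hT hmono hQ h, ?_⟩⟩
  · simpa only [sub_eq_iff_eq_add] using (bijective_sub_self_apply hT).existsUnique ς
  · exact fun ς₁ ς₂ t ht => (concaveOn_solution hT hmono hconc hQ).2 trivial trivial
      ht.1 (sub_nonneg.2 ht.2) (add_sub_cancel t 1)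

end ResolventOfContraction

section FiniteInfimum

variable {ι : Type*} [Nonempty ι]

theorem dist_iInf_iInf_le [Fintype ι] (f g : ι → ℝ) :
    dist (⨅ i, f i) (⨅ i, g i) ≤ dist f g := by
  have sub_le : ∀ f g : ι → ℝ, (⨅ i, f i) - dist f g ≤ ⨅ i, g i := fun f g => le_ciInf fun i => by
    have hfg : f i - g i ≤ dist f g := (Real.sub_le_dist _ _).trans (dist_le_pi_dist f g i)
    linarith [Finite.ciInf_le f i]
  rw [Real.dist_eq, abs_sub_le_iff]
  exact ⟨sub_le_comm.1 (sub_le f g), sub_le_comm.1 (dist_comm f g ▸ sub_le g f)⟩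

theorem concaveOn_iInf [Finite ι] : ConcaveOn ℝ univ fun f : ι → ℝ => ⨅ i, f i := by
  refine ⟨convex_univ, fun f _ g _ s t hs ht _ => le_ciInf fun i => ?_⟩
  exact add_le_add (mul_le_mul_of_nonneg_left (Finite.ciInf_le f i) hs)
    (mul_le_mul_of_nonneg_left (Finite.ciInf_le g i) ht)

end FiniteInfimum

section MulVec

variable {m n : Type*} [Fintype n]

theorem monotone_mulVec {R : Type*} [Semiring R] [PartialOrder R] [IsOrderedRing R]
    {A : Matrix m n R} (hA : ∀ i j, 0 ≤ A i j) : Monotone (A *ᵥ ·) :=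
  fun _ _ hvw i => dotProduct_le_dotProduct_of_nonneg_left hvw (hA i)

theorem lipschitzWith_mulVec {R : Type*} [NonUnitalSeminormedRing R] [Fintype m]
    {A : Matrix m n R} {K : ℝ≥0} (hA : ∀ i, ∑ j, ‖A i j‖₊ ≤ K) : LipschitzWith K (A *ᵥ ·) := by
  let _ : SeminormedAddCommGroup (Matrix m n R) := Matrix.linftyOpSeminormedAddCommGroup
  have hnorm : ‖A‖₊ ≤ K := by
    rw [Matrix.linfty_opNNNorm_def]
    exact Finset.sup_le fun i _ => hA i
  refine LipschitzWith.of_dist_le_mul fun v w => ?_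
  calc dist (A *ᵥ v) (A *ᵥ w) = ‖A *ᵥ (v - w)‖ := by rw [dist_eq_norm, Matrix.mulVec_sub]
    _ ≤ ‖A‖ * ‖v - w‖ := Matrix.linfty_opNorm_mulVec A _
    _ ≤ K * dist v w := by rw [dist_eq_norm]; gcongr; exact hnorm

end MulVec

section ContinuationCost

variable {X U ι : Type*}

/-- The minimum of a function of state-action pairs over the actions, as a function of the state.
It is encoded as an infimum, which is attained when `U` is finite and nonempty. -/
noncomputable def actionMin (q : X × U → ℝ) (x : X) : ℝ := ⨅ u, q (x, u)

theorem monotone_actionMin [Finite U] : Monotone (actionMin : (X × U → ℝ) → X → ℝ) :=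
  fun _ _ h x => Finite.ciInf_mono fun u => h (x, u)

theorem concaveOn_actionMin [Finite U] [Nonempty U] :
    ConcaveOn ℝ univ (actionMin : (X × U → ℝ) → X → ℝ) :=
  ⟨convex_univ, fun _ _ _ _ _ _ hs ht hst _ => concaveOn_iInf.2 trivial trivial hs ht hst⟩

theorem lipschitzWith_actionMin [Fintype X] [Fintype U] [Nonempty U] :
    LipschitzWith 1 (actionMin : (X × U → ℝ) → X → ℝ) := by
  refine LipschitzWith.of_dist_le_mul fun q q' => ?_
  rw [NNReal.coe_one, one_mul, dist_pi_le_iff dist_nonneg]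
  refine fun x => (dist_iInf_iInf_le _ _).trans ?_
  exact (dist_pi_le_iff dist_nonneg).2 fun u => dist_le_pi_dist q q' (x, u)

variable [Fintype X]

/-- The discounted expected minimum `β P min_u q`: the part of the right-hand side of the Bellman
equation that depends on the unknown `q`. -/
noncomputable def continuationCost (β : ℝ) (P : Matrix ι X ℝ) (q : X × U → ℝ) : ι → ℝ :=
  β • (P *ᵥ actionMin q)

variable {P : Matrix ι X ℝ} {β : ℝ}

theorem monotone_continuationCost [Finite U] (hP : ∀ i x, 0 ≤ P i x) (hβ : 0 ≤ β) :
    Monotone (continuationCost β P : (X × U → ℝ) → ι → ℝ) :=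
  ((monotone_mulVec hP).comp monotone_actionMin).const_smul hβ

theorem concaveOn_continuationCost [Finite U] [Nonempty U] (hP : ∀ i x, 0 ≤ P i x) (hβ : 0 ≤ β) :
    ConcaveOn ℝ univ (continuationCost β P : (X × U → ℝ) → ι → ℝ) := by
  have hmin := concaveOn_actionMin (X := X) (U := U)
  have hexp : ConcaveOn ℝ univ fun q : X × U → ℝ => P *ᵥ actionMin q := by
    refine ⟨convex_univ, fun q _ q' _ s t hs ht hst => ?_⟩
    calc s • (P *ᵥ actionMin q) + t • (P *ᵥ actionMin q')
        = P *ᵥ (s • actionMin q + t • actionMin q') := by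
          simp only [Matrix.mulVec_add, Matrix.mulVec_smul]
      _ ≤ P *ᵥ actionMin (s • q + t • q') :=
          monotone_mulVec hP (hmin.2 trivial trivial hs ht hst)
  exact hexp.smul hβ

theorem lipschitzWith_continuationCost [Fintype U] [Nonempty U] [Fintype ι]
    (hP : ∀ i, ∑ x, ‖P i x‖₊ ≤ 1) :
    LipschitzWith ‖β‖₊ (continuationCost β P : (X × U → ℝ) → ι → ℝ) :=
  ((lipschitzWith_smul β).comp ((lipschitzWith_mulVec hP).comp lipschitzWith_actionMin)).weaken
    (by simp only [mul_one, le_refl])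

theorem contractingWith_continuationCost [Fintype U] [Nonempty U] {P : Matrix (X × U) X ℝ}
    (hP0 : ∀ p x, 0 ≤ P p x) (hP1 : ∀ p, ∑ x, P p x ≤ 1) (hβ : |β| < 1) :
    ContractingWith ‖β‖₊ (continuationCost β P) := by
  refine ⟨hβ, lipschitzWith_continuationCost fun p => ?_⟩
  rw [← NNReal.coe_le_coe]
  simpa only [NNReal.coe_sum, coe_nnnorm, Real.norm_of_nonneg (hP0 p _), NNReal.coe_one] using hP1 p

end ContinuationCost

/-- The Q-function operator `ς ↦ Q(ς)` (the unique solution of the Bellman fixed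
point equation) is well defined, bijective, monotone and concave. -/
theorem stmt5 {X U : Type*} [Fintype X] [Fintype U] [Nonempty X] [Nonempty U]
    (P : X × U → X → ℝ) (hP0 : ∀ p x', 0 ≤ P p x') (hP1 : ∀ p, ∑ x', P p x' = 1)
    (β : ℝ) (hβ : β ∈ Set.Ioo (0 : ℝ) 1) :
    (∀ ς : X × U → ℝ, ∃! q : X × U → ℝ,
        ∀ p, q p = ς p + β * ∑ x', P p x' * ⨅ u' : U, q (x', u')) ∧
    ∀ Q : (X × U → ℝ) → (X × U → ℝ),
      (∀ ς p, Q ς p = ς p + β * ∑ x', P p x' * ⨅ u' : U, Q ς (x', u')) →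
      Function.Bijective Q ∧
      (∀ ς₁ ς₂ : X × U → ℝ, (∀ p, ς₁ p ≤ ς₂ p) → ∀ p, Q ς₁ p ≤ Q ς₂ p) ∧
      (∀ ς₁ ς₂ : X × U → ℝ, ∀ t ∈ Set.Icc (0 : ℝ) 1, ∀ p,
        t * Q ς₁ p + (1 - t) * Q ς₂ p ≤
          Q (fun p' => t * ς₁ p' + (1 - t) * ς₂ p') p) := by
  have hβabs : |β| < 1 := abs_lt.2 ⟨neg_one_lt_zero.trans hβ.1, hβ.2⟩
  have h := stmt5_general (contractingWith_continuationCost hP0 (fun p => (hP1 p).le) hβabs)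
    (monotone_continuationCost hP0 hβ.1.le) (concaveOn_continuationCost hP0 hβ.1.le)
  simp only [funext_iff] at h
  exact h
end

section
/- Let S be a d×d row-stochastic matrix (nonnegative entries, each row summing to 1) that is irreducible (for every pair of indices i, j there exists n ≥ 1 with (Sⁿ)_{ij} > 0). Let β ∈ (0,1) and let Π be a diagonal d×d matrix with strictly positive diagonal entries ϖ_1,…,ϖ_d. Set A = −Π (I − β S). Then there exist a real eigenvalue λ of A and an eigenvector v ∈ ℝ^d with strictly positive entries such that A v = λ v and −(1−β) · max_k ϖ_k ≤ λ < 0. -/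
open Matrix

/-!
Adding a large multiple of the identity turns `A = -Π(I - βS)` into an irreducible nonnegative
matrix, so Perron–Frobenius provides a positive eigenvector `v`, with eigenvalue `λ` for `A`. As
the off-diagonal entries of `A` are nonnegative, evaluating `A v = λ v` where `v` is smallest,
respectively largest, places `λ` between two row sums of `A`, and the `i`-th row sum is
`-(1 - β) ϖ i`.

For Perron–Frobenius itself, let `r` be the least `s` such that `M x ≤ s x` for some nonnegative
`x ≠ 0`, and let `B` be an entrywise positive sum of powers of `M`. Were `M x ≠ r x` for a
minimizing `x`, applying `B` would give `M (B x) < r (B x)` in every coordinate, and `r` could be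
decreased. So `B x` is a positive eigenvector.
-/

section Entrywise

variable {n R : Type*} [Fintype n]

theorem mulVec_apply_pos [Semiring R] [PartialOrder R] [IsStrictOrderedRing R]
    {B : Matrix n n R} (hB : ∀ i j, 0 < B i j) {x : n → R} (hx : 0 < x) (i : n) :
    0 < (B *ᵥ x) i := by
  obtain ⟨hx_nonneg, j, hj⟩ := Pi.lt_def.mp hx
  exact Finset.sum_pos' (fun k _ => mul_nonneg (hB i k).le (hx_nonneg k))
    ⟨j, Finset.mem_univ j, mul_pos (hB i j) hj⟩

theorem mulVec_apply_le_sum_mul [Semiring R] [PartialOrder R] [IsOrderedRing R]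
    {A : Matrix n n R} {i : n} (hA : ∀ j, i ≠ j → 0 ≤ A i j) {v : n → R}
    (hv : ∀ j, v j ≤ v i) : (A *ᵥ v) i ≤ (∑ j, A i j) * v i := by
  rw [mulVec, dotProduct, Finset.sum_mul]
  refine Finset.sum_le_sum fun j _ => ?_
  obtain rfl | hij := eq_or_ne i j
  · exact le_rfl
  · exact mul_le_mul_of_nonneg_left (hv j) (hA j hij)

theorem sum_mul_le_mulVec_apply [Semiring R] [PartialOrder R] [IsOrderedRing R]
    {A : Matrix n n R} {i : n} (hA : ∀ j, i ≠ j → 0 ≤ A i j) {v : n → R}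
    (hv : ∀ j, v i ≤ v j) : (∑ j, A i j) * v i ≤ (A *ᵥ v) i := by
  rw [mulVec, dotProduct, Finset.sum_mul]
  refine Finset.sum_le_sum fun j _ => ?_
  obtain rfl | hij := eq_or_ne i j
  · exact le_rfl
  · exact mul_le_mul_of_nonneg_left (hv j) (hA j hij)

variable [Nonempty n] [Semiring R] [LinearOrder R] [IsStrictOrderedRing R]
  {A : Matrix n n R} {lam : R} {v : n → R}

theorem exists_eigenvalue_le_sum_row (hA : ∀ i j, i ≠ j → 0 ≤ A i j) (hv : ∀ i, 0 < v i)
    (hAv : A *ᵥ v = lam • v) : ∃ i, lam ≤ ∑ j, A i j := by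
  obtain ⟨i, hi⟩ := Finite.exists_max v
  have h : lam * v i ≤ (∑ j, A i j) * v i := by
    simpa only [hAv, Pi.smul_apply, smul_eq_mul] using mulVec_apply_le_sum_mul (hA i) hi
  exact ⟨i, le_of_mul_le_mul_right h (hv i)⟩

theorem exists_sum_row_le_eigenvalue (hA : ∀ i j, i ≠ j → 0 ≤ A i j) (hv : ∀ i, 0 < v i)
    (hAv : A *ᵥ v = lam • v) : ∃ i, ∑ j, A i j ≤ lam := by
  obtain ⟨i, hi⟩ := Finite.exists_min v
  have h : (∑ j, A i j) * v i ≤ lam * v i := by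
    simpa only [hAv, Pi.smul_apply, smul_eq_mul] using sum_mul_le_mulVec_apply (hA i) hi
  exact ⟨i, le_of_mul_le_mul_right h (hv i)⟩

end Entrywise

theorem exists_le_div_smul {n R : Type*} [Finite n] [Nonempty n] [Field R] [LinearOrder R]
    [IsStrictOrderedRing R] {y : n → R} (hy : ∀ i, 0 < y i) (z : n → R) :
    ∃ i, z ≤ (z i / y i) • y := by
  obtain ⟨i, hi⟩ := Finite.exists_max fun j => z j / y j
  exact ⟨i, fun j => (div_le_iff₀ (hy j)).mp (hi j)⟩

section Irreducible

theorem mapPath_length {V W : Type*} [Quiver V] [Quiver W] (F : V ⥤q W) {a b : V}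
    (p : Quiver.Path a b) : (F.mapPath p).length = p.length := by
  induction p with
  | nil => rfl
  | cons _ _ ih => exact congrArg (· + 1) ih

theorem isSStronglyConnected_of_surjective {V W : Type*} [Quiver V] [Quiver W] (F : V ⥤q W)
    (hF : Function.Surjective F.obj) (hV : Quiver.IsSStronglyConnected V) :
    Quiver.IsSStronglyConnected W := by
  refine hF.forall₂.mpr fun a b => ?_
  obtain ⟨p, hp⟩ := hV a b
  exact ⟨F.mapPath p, (mapPath_length F p).symm ▸ hp⟩

variable {n R : Type*} [Ring R] [LinearOrder R]

theorem isIrreducible_of_pos_imp_pos {M N : Matrix n n R} (hM : M.IsIrreducible)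
    (hN : ∀ i j, 0 ≤ N i j) (hMN : ∀ i j, 0 < M i j → 0 < N i j) : N.IsIrreducible :=
  let F : @Prefunctor n M.toQuiver n N.toQuiver :=
    @Prefunctor.mk n M.toQuiver n N.toQuiver id fun e => ⟨hMN _ _ e.down⟩
  ⟨hN, @isSStronglyConnected_of_surjective n n M.toQuiver N.toQuiver F Function.surjective_id
    hM.connected⟩

theorem exists_pos_commute_of_isIrreducible [Fintype n] [IsStrictOrderedRing R]
    {M : Matrix n n R} (hM : M.IsIrreducible) :
    ∃ B : Matrix n n R, (∀ i j, 0 < B i j) ∧ Commute M B := by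
  classical
  choose k _ hk using (isIrreducible_iff_exists_pow_pos hM.nonneg).mp hM
  refine ⟨∑ p : n × n, M ^ k p.1 p.2, fun i j => ?_,
    Commute.sum_right _ _ _ fun p _ => Commute.self_pow M _⟩
  rw [Matrix.sum_apply]
  exact Finset.sum_pos' (fun p _ => pow_apply_nonneg hM.nonneg _ i j)
    ⟨(i, j), Finset.mem_univ _, hk i j⟩

end Irreducible

section PerronFrobenius

variable {n : Type*} [Fintype n] {M : Matrix n n ℝ} {s : ℝ} {x : n → ℝ}

/-- The Collatz–Wielandt set of `M`: all `s` such that `M *ᵥ x ≤ s • x` for some nonnegative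
`x ≠ 0`. Its least element is the Perron root when `M` is nonnegative and irreducible. Vectors are
normalized to the simplex, so that compactness applies; see `mem_superEigenvalues` for the
scale-invariant form. -/
def superEigenvalues (M : Matrix n n ℝ) : Set ℝ :=
  {s | ∃ x ∈ stdSimplex ℝ n, M *ᵥ x ≤ s • x}

theorem mem_superEigenvalues : s ∈ superEigenvalues M ↔ ∃ x, 0 < x ∧ M *ᵥ x ≤ s • x := by
  constructor
  · rintro ⟨x, ⟨hx_nonneg, hx_sum⟩, hMx⟩
    refine ⟨x, lt_of_le_of_ne hx_nonneg ?_, hMx⟩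
    rintro rfl
    simp at hx_sum
  · rintro ⟨x, hx, hMx⟩
    have hsum : 0 < ∑ i, x i := Fintype.sum_pos hx
    have hinv : 0 ≤ (∑ i, x i)⁻¹ := inv_nonneg.mpr hsum.le
    refine ⟨(∑ i, x i)⁻¹ • x, ⟨fun i => mul_nonneg hinv (hx.le i), ?_⟩, ?_⟩
    · simp only [Pi.smul_apply, smul_eq_mul, ← Finset.mul_sum]
      exact inv_mul_cancel₀ hsum.ne'
    · rw [mulVec_smul, smul_comm]
      exact smul_le_smul_of_nonneg_left hMx hinv

theorem isClosed_superEigenvalues (M : Matrix n n ℝ) : IsClosed (superEigenvalues M) := by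
  have hclosed : IsClosed {p : ℝ × stdSimplex ℝ n | M *ᵥ p.2.1 ≤ p.1 • p.2.1} :=
    isClosed_le (by fun_prop) (by fun_prop)
  convert isClosedMap_fst_of_compactSpace _ hclosed using 1
  ext s
  simp [superEigenvalues]

theorem nonneg_of_mem_superEigenvalues (hM : ∀ i j, 0 ≤ M i j) (hs : s ∈ superEigenvalues M) :
    0 ≤ s := by
  obtain ⟨x, hx, hMx⟩ := mem_superEigenvalues.mp hs
  obtain ⟨hx_nonneg, i, hi⟩ := Pi.lt_def.mp hx
  have hMxi : 0 ≤ (M *ᵥ x) i := Finset.sum_nonneg fun j _ => mul_nonneg (hM i j) (hx_nonneg j)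
  exact nonneg_of_mul_nonneg_left (hMxi.trans (hMx i)) hi

variable [Nonempty n]

theorem exists_mulVec_div_mem_superEigenvalues (M : Matrix n n ℝ) (hx : ∀ i, 0 < x i) :
    ∃ i, (M *ᵥ x) i / x i ∈ superEigenvalues M := by
  obtain ⟨i, hi⟩ := exists_le_div_smul hx (M *ᵥ x)
  have hx_pos : 0 < x := Pi.lt_def.mpr ⟨fun j => (hx j).le, i, hx i⟩
  exact ⟨i, mem_superEigenvalues.mpr ⟨x, hx_pos, hi⟩⟩

theorem exists_isLeast_superEigenvalues (hM : ∀ i j, 0 ≤ M i j) :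
    ∃ r, IsLeast (superEigenvalues M) r := by
  obtain ⟨i, hi⟩ := exists_mulVec_div_mem_superEigenvalues M (x := 1) fun _ => one_pos
  exact ⟨_, (isClosed_superEigenvalues M).isLeast_csInf ⟨_, hi⟩
    ⟨0, fun _ => nonneg_of_mem_superEigenvalues hM⟩⟩

theorem mulVec_eq_smul_of_isLeast {B : Matrix n n ℝ} (hB : ∀ i j, 0 < B i j)
    (hMB : Commute M B) {r : ℝ} (hr : IsLeast (superEigenvalues M) r) (hx : 0 < x)
    (hMx : M *ᵥ x ≤ r • x) : M *ᵥ x = r • x := by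
  by_contra hne
  have hBx : ∀ i, 0 < (B *ᵥ x) i := mulVec_apply_pos hB hx
  have hMBx : ∀ i, (M *ᵥ (B *ᵥ x)) i < r * (B *ᵥ x) i := by
    intro i
    have h := mulVec_apply_pos hB (sub_pos.mpr (lt_of_le_of_ne hMx hne)) i
    rw [mulVec_sub, mulVec_smul, mulVec_mulVec, ← hMB.eq, ← mulVec_mulVec] at h
    exact sub_pos.mp h
  obtain ⟨i, hi⟩ := exists_mulVec_div_mem_superEigenvalues M hBx
  exact (hr.2 hi).not_gt ((div_lt_iff₀ (hBx i)).mpr (hMBx i))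

theorem exists_pos_eigenvector_of_isIrreducible (hM : M.IsIrreducible) :
    ∃ (r : ℝ) (v : n → ℝ), (∀ i, 0 < v i) ∧ M *ᵥ v = r • v := by
  obtain ⟨B, hB, hMB⟩ := exists_pos_commute_of_isIrreducible hM
  obtain ⟨r, hr⟩ := exists_isLeast_superEigenvalues hM.nonneg
  obtain ⟨x, hx, hMx⟩ := mem_superEigenvalues.mp hr.1
  refine ⟨r, B *ᵥ x, mulVec_apply_pos hB hx, ?_⟩
  rw [mulVec_mulVec, hMB.eq, ← mulVec_mulVec, mulVec_eq_smul_of_isLeast hB hMB hr hx hMx,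
    mulVec_smul]

theorem exists_pos_eigenvector_of_isIrreducible_add_smul_one [DecidableEq n]
    {A : Matrix n n ℝ} {c : ℝ} (hA : (A + c • (1 : Matrix n n ℝ)).IsIrreducible) :
    ∃ (lam : ℝ) (v : n → ℝ), (∀ i, 0 < v i) ∧ A *ᵥ v = lam • v := by
  obtain ⟨r, v, hv, hrv⟩ := exists_pos_eigenvector_of_isIrreducible hA
  refine ⟨r - c, v, hv, ?_⟩
  rw [sub_smul, ← hrv, add_mulVec, smul_mulVec, one_mulVec, add_sub_cancel_right]

end PerronFrobenius

section QLearning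

variable {n : Type*} [Fintype n] [DecidableEq n] {ϖ : n → ℝ} {β : ℝ} {S : Matrix n n ℝ}

/-- The linearization `A = -Π(I - βS)` at the optimum of the mean-field ODE of Q-learning, where
`Π = diagonal ϖ` holds the steady-state state-action frequencies and `S` is the transition matrix
of the state-action process under the optimal policy. -/
def qLinearization (ϖ : n → ℝ) (β : ℝ) (S : Matrix n n ℝ) : Matrix n n ℝ :=
  -(diagonal ϖ * (1 - β • S))

theorem qLinearization_apply (i j : n) :
    qLinearization ϖ β S i j = ϖ i * (β * S i j - (1 : Matrix n n ℝ) i j) := by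
  simp only [qLinearization, Matrix.neg_apply, diagonal_mul, Matrix.sub_apply,
    Matrix.smul_apply, smul_eq_mul]
  ring

theorem qLinearization_apply_nonneg_of_ne (hϖ : ∀ i, 0 ≤ ϖ i) (hβ : 0 ≤ β)
    (hS : ∀ i j, 0 ≤ S i j) {i j : n} (hij : i ≠ j) : 0 ≤ qLinearization ϖ β S i j := by
  rw [qLinearization_apply, one_apply_ne hij, sub_zero]
  exact mul_nonneg (hϖ i) (mul_nonneg hβ (hS i j))

theorem sum_qLinearization {i : n} (hS : ∑ j, S i j = 1) :
    ∑ j, qLinearization ϖ β S i j = -((1 - β) * ϖ i) := by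
  simp only [qLinearization_apply, ← Finset.mul_sum, Finset.sum_sub_distrib, hS, one_apply,
    Finset.sum_ite_eq, Finset.mem_univ, if_true]
  ring

theorem isIrreducible_qLinearization_add_smul_one (hS : S.IsIrreducible) (hβ : 0 < β)
    (hϖ : ∀ i, 0 < ϖ i) {c : ℝ} (hc : ∀ i, ϖ i ≤ c) :
    (qLinearization ϖ β S + c • (1 : Matrix n n ℝ)).IsIrreducible := by
  have hscale : ∀ i, 0 < ϖ i * β := fun i => mul_pos (hϖ i) hβ
  have hle : ∀ i j, ϖ i * β * S i j ≤ (qLinearization ϖ β S + c • (1 : Matrix n n ℝ)) i j := by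
    intro i j
    rw [Matrix.add_apply, qLinearization_apply, Matrix.smul_apply, smul_eq_mul, one_apply]
    split_ifs <;> linarith [hc i]
  exact isIrreducible_of_pos_imp_pos hS
    (fun i j => (mul_nonneg (hscale i).le (hS.nonneg i j)).trans (hle i j))
    (fun i j hij => (mul_pos (hscale i) hij).trans_le (hle i j))

theorem stmt7_general [Nonempty n] (hS : S.IsIrreducible) (hS1 : ∀ i, ∑ j, S i j = 1)
    (hβ : β ∈ Set.Ioo (0 : ℝ) 1) (hϖ : ∀ i, 0 < ϖ i) :
    ∃ (lam : ℝ) (v : n → ℝ), (∀ i, 0 < v i) ∧ qLinearization ϖ β S *ᵥ v = lam • v ∧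
      -((1 - β) * ⨆ k, ϖ k) ≤ lam ∧ lam < 0 := by
  obtain ⟨hβ0, hβ1⟩ := hβ
  have hsup : ∀ i, ϖ i ≤ ⨆ k, ϖ k := le_ciSup (Set.finite_range ϖ).bddAbove
  obtain ⟨lam, v, hv, hlam⟩ := exists_pos_eigenvector_of_isIrreducible_add_smul_one
    (isIrreducible_qLinearization_add_smul_one hS hβ0 hϖ hsup)
  have hoff : ∀ i j, i ≠ j → 0 ≤ qLinearization ϖ β S i j := fun _ _ =>
    qLinearization_apply_nonneg_of_ne (fun i => (hϖ i).le) hβ0.le hS.nonneg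
  obtain ⟨i, hi⟩ := exists_sum_row_le_eigenvalue hoff hv hlam
  obtain ⟨j, hj⟩ := exists_eigenvalue_le_sum_row hoff hv hlam
  rw [sum_qLinearization (hS1 _)] at hi hj
  have hβ' : 0 < 1 - β := sub_pos.mpr hβ1
  refine ⟨lam, v, hv, hlam, ?_, hj.trans_lt (neg_neg_of_pos (mul_pos hβ' (hϖ j)))⟩
  exact (neg_le_neg (mul_le_mul_of_nonneg_left (hsup i) hβ'.le)).trans hi

end QLearning

/-- Perron–Frobenius construction: for `A = -Π(I - βS)` with `S` irreducible
row-stochastic and `Π = diag(ϖ)`, there is a strictly positive eigenvector with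
real eigenvalue `λ ∈ [-(1-β)·max_k ϖ_k, 0)`. -/
theorem stmt7 {d : ℕ} [NeZero d]
    (S : Matrix (Fin d) (Fin d) ℝ)
    (hS0 : ∀ i j, 0 ≤ S i j) (hS1 : ∀ i, ∑ j, S i j = 1)
    (hirr : ∀ i j, ∃ n : ℕ, 1 ≤ n ∧ 0 < (S ^ n) i j)
    (β : ℝ) (hβ : β ∈ Set.Ioo (0 : ℝ) 1)
    (ϖ : Fin d → ℝ) (hϖ : ∀ k, 0 < ϖ k) :
    ∃ (lam : ℝ) (v : Fin d → ℝ),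
      (∀ i, 0 < v i) ∧
      (-(Matrix.diagonal ϖ * (1 - β • S))).mulVec v = lam • v ∧
      -((1 - β) * ⨆ k, ϖ k) ≤ lam ∧ lam < 0 :=
  stmt7_general ((isIrreducible_iff_exists_pow_pos hS0).mpr hirr) hS1 hβ hϖ
end

section
/- Let X and U be finite nonempty sets, P a matrix with rows indexed by X×U and columns by X having nonnegative entries and each row summing to 1, β ∈ (0,1). Fix an enumeration φ^{(1)},…,φ^{(ℓ)} of all deterministic policies φ : X → U, and for q : X×U → ℝ with argmin_u q(x,u) nonempty for each x, define φ^q := φ^{(κ)}, where κ is the smallest index i such that φ^{(i)}(x) ∈ argmin_u q(x,u) for every x ∈ X. Then for each k ∈ {1,…,ℓ}, the set Θ^k := { q : X×U → [0,∞) : φ^q = φ^{(k)} } is convex, and is a positive cone: if q ∈ Θ^k and t > 0 then t·q ∈ Θ^k. -/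
open Matrix

/-!
A policy that is greedy for both `q` and `r` attains the two minima simultaneously, so the greedy
policies of `q + r` are exactly those greedy for both; scaling by `t > 0` does not change the greedy
policies at all. If `k` is the least index of a greedy policy for `q` and for `r`, it is therefore
the least element of the intersection of the two index sets, which makes the functions with least
greedy index `k` a convex cone. Intersecting with the cone of nonnegative functions gives `Θ^k`.
-/

section Greedy

variable {𝕜 M X U I : Type*}

/-- The policy `φ` is greedy for the Q-function `q`, which is read as a cost: `φ x` lies in
`argmin_u q (x, u)` for every state `x`. -/
def IsGreedy [LE M] (q : X × U → M) (φ : X → U) : Prop :=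
  ∀ x u, q (x, φ x) ≤ q (x, u)

section Add

variable [AddCommMonoid M] [PartialOrder M] {q r : X × U → M} {φ ψ : X → U}

theorem IsGreedy.add [IsOrderedAddMonoid M] (hq : IsGreedy q φ) (hr : IsGreedy r φ) :
    IsGreedy (q + r) φ :=
  fun x u => add_le_add (hq x u) (hr x u)

variable [IsOrderedCancelAddMonoid M]

theorem IsGreedy.of_add_left (hq : IsGreedy q ψ) (hr : IsGreedy r ψ)
    (hqr : IsGreedy (q + r) φ) : IsGreedy q φ := by
  intro x u
  have hsum : q (x, φ x) + r (x, φ x) ≤ q (x, ψ x) + r (x, φ x) :=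
    calc
      q (x, φ x) + r (x, φ x) ≤ q (x, ψ x) + r (x, ψ x) := hqr x (ψ x)
      _ ≤ q (x, ψ x) + r (x, φ x) := by gcongr; exact hr x (φ x)
  exact (le_of_add_le_add_right hsum).trans (hq x u)

theorem isLeast_isGreedy_add [Preorder I] {e : I → X → U} {k : I}
    (hq : IsLeast {i | IsGreedy q (e i)} k) (hr : IsLeast {i | IsGreedy r (e i)} k) :
    IsLeast {i | IsGreedy (q + r) (e i)} k :=
  ⟨hq.1.add hr.1, fun _ hi => hq.2 (hq.1.of_add_left hr.1 hi)⟩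

end Add

theorem isGreedy_smul_iff_of_pos [Zero 𝕜] [Preorder 𝕜] [Preorder M] [SMul 𝕜 M] [PosSMulMono 𝕜 M]
    [PosSMulReflectLE 𝕜 M] {q : X × U → M} {φ : X → U} {t : 𝕜} (ht : 0 < t) :
    IsGreedy (t • q) φ ↔ IsGreedy q φ :=
  forall₂_congr fun _ _ => smul_le_smul_iff_of_pos_left ht

section Cone

variable [Semiring 𝕜] [PartialOrder 𝕜] [AddCommMonoid M] [PartialOrder M]
  [IsOrderedCancelAddMonoid M] [Module 𝕜 M] [PosSMulMono 𝕜 M] [PosSMulReflectLE 𝕜 M] [Preorder I]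

variable (𝕜 M) in
/-- The convex cone of Q-functions, of arbitrary sign, for which `k` is the least index of a greedy
policy in the family `e`. It contains `0` only if `k` is the least index of all. -/
def greedyCone (e : I → X → U) (k : I) : ConvexCone 𝕜 (X × U → M) where
  carrier := {q | IsLeast {i | IsGreedy q (e i)} k}
  smul_mem' t ht q hq := by simpa only [Set.mem_ofPred_eq, isGreedy_smul_iff_of_pos ht] using hq
  add_mem' _ hq _ hr := isLeast_isGreedy_add hq hr

theorem stmt10_general (e : I → X → U) (k : I) :
    Convex 𝕜 {q : X × U → M | (∀ p, 0 ≤ q p) ∧ IsLeast {i | IsGreedy q (e i)} k} ∧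
    ∀ q ∈ {q : X × U → M | (∀ p, 0 ≤ q p) ∧ IsLeast {i | IsGreedy q (e i)} k}, ∀ t : 𝕜, 0 < t →
      t • q ∈ {q : X × U → M | (∀ p, 0 ≤ q p) ∧ IsLeast {i | IsGreedy q (e i)} k} :=
  let Θ := ConvexCone.positive 𝕜 (X × U → M) ⊓ greedyCone 𝕜 M e k
  ⟨Θ.convex, fun _ hq _ ht => Θ.smul_mem ht hq⟩

end Cone

end Greedy

/-- For each policy index `k`, the set `Θ^k` of nonnegative Q-functions whose
(tie-broken) greedy policy is `φ^{(k)}` is a convex positive cone. -/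
theorem stmt10 {X U : Type*} [Fintype X] [Fintype U] [Nonempty X] [Nonempty U]
    (P : X × U → X → ℝ) (hP0 : ∀ p x', 0 ≤ P p x') (hP1 : ∀ p, ∑ x', P p x' = 1)
    (β : ℝ) (hβ : β ∈ Set.Ioo (0 : ℝ) 1)
    (ℓ : ℕ) (e : Fin ℓ ≃ (X → U))
    (ι : (X × U → ℝ) → Fin ℓ)
    (hιopt : ∀ (q : X × U → ℝ) (x : X) (u : U), q (x, e (ι q) x) ≤ q (x, u))
    (hιmin : ∀ (q : X × U → ℝ) (i : Fin ℓ),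
      (∀ (x : X) (u : U), q (x, e i x) ≤ q (x, u)) → ι q ≤ i)
    (k : Fin ℓ) :
    Convex ℝ {q : X × U → ℝ | (∀ p, 0 ≤ q p) ∧ ι q = k} ∧
    ∀ q ∈ {q : X × U → ℝ | (∀ p, 0 ≤ q p) ∧ ι q = k}, ∀ t : ℝ, 0 < t →
      t • q ∈ {q : X × U → ℝ | (∀ p, 0 ≤ q p) ∧ ι q = k} := by
  have hι (q) : IsLeast {i | IsGreedy q (e i)} (ι q) := ⟨hιopt q, hιmin q⟩
  simpa only [(hι _).isLeast_iff_eq] using stmt10_general (𝕜 := ℝ) (M := ℝ) e k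
end

section
/- Let X and U be finite nonempty sets, P a matrix with rows indexed by X×U and columns by X having nonnegative entries and each row summing to 1, β ∈ (0,1). Fix an enumeration φ^{(1)},…,φ^{(ℓ)} of all deterministic policies φ : X → U, and for a probability mass function μ on {1,…,ℓ} let ∂Q_μ denote the inverse of the matrix Σ_i μ(i)(I − β P S_{φ^{(i)}}). Let c, q : ℝ → ℝ^{X×U} be curves with q_t = Q(c_t) for all t ∈ ℝ, let t₀ ∈ ℝ be a point at which both q and c are differentiable, and let μ be a probability mass function on {1,…,ℓ} satisfying ∂Q_μ c_{t₀} = q_{t₀}. Then the derivatives satisfy q'(t₀) = ∂Q_μ c'(t₀). -/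
open Matrix

/-!
For a fixed weight vector `μ`, put `A = ∑ i, μ i • (1 - β P S_{φ i})`. A minimum over actions is at
most any average over actions, so the Bellman equation gives `A q_t ≤ c_t` for every `t`, with
equality at `t₀` by hypothesis. Each entry of `c_t - A q_t` thus has a minimum at `t₀`, so its
derivative vanishes there: `c' = A q'`. Finally `A = 1 - β P S` for the averaged policy matrix `S`,
which is invertible because `‖β P S‖ < 1` in the `ℓ^∞` operator norm.
-/

section LinearMinorant

variable {E ι : Type*} [NormedAddCommGroup E] [NormedSpace ℝ E]

lemma hasFDerivAt_eq_of_eventually_le_of_eq {f g : E → ι → ℝ} {f' g' : E →L[ℝ] ι → ℝ} {x : E}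
    (hf : HasFDerivAt f f' x) (hg : HasFDerivAt g g' x) (hle : ∀ᶠ y in nhds x, f y ≤ g y)
    (heq : f x = g x) : f' = g' := by
  ext v i
  have hgap : HasFDerivAt (fun y => g y i - f y i)
      ((ContinuousLinearMap.proj i).comp g' - (ContinuousLinearMap.proj i).comp f') x :=
    (hasFDerivAt_pi'.1 hg i).sub (hasFDerivAt_pi'.1 hf i)
  have hmin : IsLocalMin (fun y => g y i - f y i) x := by
    filter_upwards [hle] with y hy
    simpa [heq] using hy i
  have hzero := DFunLike.congr_fun (hmin.hasFDerivAt_eq_zero hgap) v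
  exact (sub_eq_zero.1 hzero).symm

variable [Fintype ι] [DecidableEq ι]

lemma eq_inv_mulVec_iff {R : Type*} [CommRing R] {A : Matrix ι ι R}
    (hA : IsUnit A) {v w : ι → R} : v = A⁻¹ *ᵥ w ↔ A *ᵥ v = w := by
  have hdet := A.isUnit_iff_isUnit_det.1 hA
  constructor
  · rintro rfl
    rw [mulVec_mulVec, mul_nonsing_inv A hdet, one_mulVec]
  · rintro rfl
    rw [mulVec_mulVec, nonsing_inv_mul A hdet, one_mulVec]

lemma hasFDerivAt_apply_eq_inv_mulVec {A : Matrix ι ι ℝ} (hA : IsUnit A)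
    {c q : E → ι → ℝ} {c' q' : E →L[ℝ] ι → ℝ} {x : E}
    (hc : HasFDerivAt c c' x) (hq : HasFDerivAt q q' x)
    (hle : ∀ᶠ y in nhds x, A *ᵥ q y ≤ c y) (heq : A⁻¹ *ᵥ c x = q x) (v : E) :
    q' v = A⁻¹ *ᵥ c' v := by
  have hAq : HasFDerivAt (fun y => A *ᵥ q y)
      ((LinearMap.toContinuousLinearMap A.mulVecLin).comp q') x :=
    (LinearMap.toContinuousLinearMap A.mulVecLin).hasFDerivAt.comp x hq
  have hderiv := hasFDerivAt_eq_of_eventually_le_of_eq hAq hc hle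
    ((eq_inv_mulVec_iff hA).1 heq.symm)
  exact (eq_inv_mulVec_iff hA).2 (DFunLike.congr_fun hderiv v)

end LinearMinorant

section NonnegativeMatrix

variable {m n : Type*} [Fintype n] {K : Matrix m n ℝ}

lemma mulVec_le_mulVec_of_nonneg (hK : ∀ i j, 0 ≤ K i j) {v w : n → ℝ} (hvw : v ≤ w) :
    K *ᵥ v ≤ K *ᵥ w :=
  fun i => dotProduct_le_dotProduct_of_nonneg_left hvw (hK i)

open scoped Matrix.Norms.Operator in
lemma linfty_opNorm_le_one_of_nonneg [Fintype m] (hK : ∀ i j, 0 ≤ K i j)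
    (hsum : ∀ i, ∑ j, K i j ≤ 1) : ‖K‖ ≤ 1 := by
  rw [linfty_opNorm_def, NNReal.coe_le_one]
  refine Finset.sup_le fun i _ => ?_
  rw [← NNReal.coe_le_one]
  simpa [abs_of_nonneg (hK i _)] using hsum i

end NonnegativeMatrix

section Policy

variable {X U ι : Type*}

/-- The statewise minimum `x ↦ min_u v (x, u)` of a function on state-action pairs, as it occurs in
the Bellman equation; it is encoded as an infimum. -/
noncomputable def stateMin (v : X × U → ℝ) (x : X) : ℝ :=
  ⨅ u, v (x, u)

variable [DecidableEq X] [DecidableEq U]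

/-- The matrix `S_φ` of a deterministic policy `φ`: multiplying a function on state-action pairs by
`S_φ` evaluates it along `φ`. -/
def policyMatrix (φ : X → U) : Matrix X (X × U) ℝ :=
  of fun x p => if p.1 = x ∧ p.2 = φ x then 1 else 0

variable [Fintype ι]

/-- The matrix of the randomized policy that draws `φ i` with probability `μ i`. It gathers the
dependence of the average of the matrices `1 - β P S_{φ i}` on the policies. -/
def mixedPolicyMatrix (φ : ι → X → U) (μ : ι → ℝ) : Matrix X (X × U) ℝ :=
  ∑ i, μ i • policyMatrix (φ i)

lemma sum_smul_one_sub_smul_mul_policyMatrix [Fintype X] (P : Matrix (X × U) X ℝ) (β : ℝ)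
    (φ : ι → X → U) {μ : ι → ℝ} (hμ1 : ∑ i, μ i = 1) :
    ∑ i, μ i • (1 - β • (P * policyMatrix (φ i))) = 1 - β • (P * mixedPolicyMatrix φ μ) := by
  simp only [mixedPolicyMatrix, smul_sub, Finset.sum_sub_distrib, ← Finset.sum_smul, hμ1, one_smul,
    Matrix.mul_sum, Matrix.mul_smul, Finset.smul_sum, smul_comm β]

variable [Fintype X] [Fintype U]

lemma policyMatrix_mulVec (φ : X → U) (v : X × U → ℝ) (x : X) :
    (policyMatrix φ *ᵥ v) x = v (x, φ x) := by
  simp [policyMatrix, mulVec, dotProduct, Fintype.sum_prod_type, ite_and]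

lemma stateMin_le_policyMatrix_mulVec (φ : X → U) (v : X × U → ℝ) :
    stateMin v ≤ policyMatrix φ *ᵥ v := fun x => by
  rw [policyMatrix_mulVec]
  exact ciInf_le (Set.finite_range _).bddBelow (φ x)

open scoped Matrix.Norms.Operator in
lemma linfty_opNorm_policyMatrix_le_one (φ : X → U) : ‖policyMatrix φ‖ ≤ 1 := by
  refine linfty_opNorm_le_one_of_nonneg (fun x p => ?_) fun x => ?_
  · rw [policyMatrix, of_apply]
    positivity
  · simpa [mulVec, dotProduct] using (policyMatrix_mulVec φ 1 x).le

variable (φ : ι → X → U) {μ : ι → ℝ}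

lemma stateMin_le_mixedPolicyMatrix_mulVec (hμ0 : ∀ i, 0 ≤ μ i) (hμ1 : ∑ i, μ i = 1)
    (v : X × U → ℝ) : stateMin v ≤ mixedPolicyMatrix φ μ *ᵥ v := by
  rw [mixedPolicyMatrix, sum_mulVec]
  simp only [smul_mulVec]
  exact (convex_Ici (stateMin v)).sum_mem (fun i _ => hμ0 i) hμ1
    fun i _ => stateMin_le_policyMatrix_mulVec (φ i) v

open scoped Matrix.Norms.Operator in
lemma linfty_opNorm_mixedPolicyMatrix_le_one (hμ0 : ∀ i, 0 ≤ μ i) (hμ1 : ∑ i, μ i = 1) :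
    ‖mixedPolicyMatrix φ μ‖ ≤ 1 :=
  mem_closedBall_zero_iff.1 <| (convex_closedBall 0 1).sum_mem (fun i _ => hμ0 i) hμ1
    fun i _ => mem_closedBall_zero_iff.2 (linfty_opNorm_policyMatrix_le_one (φ i))

variable {P : Matrix (X × U) X ℝ} {β : ℝ}

open scoped Matrix.Norms.Operator in
lemma isUnit_one_sub_smul_mul_mixedPolicyMatrix (hP0 : ∀ p x, 0 ≤ P p x)
    (hP1 : ∀ p, ∑ x, P p x ≤ 1) (hβ : |β| < 1) (hμ0 : ∀ i, 0 ≤ μ i) (hμ1 : ∑ i, μ i = 1) :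
    IsUnit (1 - β • (P * mixedPolicyMatrix φ μ)) := by
  have hPS : ‖P * mixedPolicyMatrix φ μ‖ ≤ 1 :=
    (linfty_opNorm_mul _ _).trans <| mul_le_one₀ (linfty_opNorm_le_one_of_nonneg hP0 hP1)
      (norm_nonneg _) (linfty_opNorm_mixedPolicyMatrix_le_one φ hμ0 hμ1)
  refine isUnit_one_sub_of_norm_lt_one ?_
  calc ‖β • (P * mixedPolicyMatrix φ μ)‖ = |β| * ‖P * mixedPolicyMatrix φ μ‖ := norm_smul _ _
    _ ≤ |β| := mul_le_of_le_one_right (abs_nonneg β) hPS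
    _ < 1 := hβ

lemma one_sub_smul_mul_mixedPolicyMatrix_mulVec_le (hP0 : ∀ p x, 0 ≤ P p x) (hβ : 0 ≤ β)
    (hμ0 : ∀ i, 0 ≤ μ i) (hμ1 : ∑ i, μ i = 1) {c q : X × U → ℝ}
    (hq : q ≤ c + β • P *ᵥ stateMin q) :
    (1 - β • (P * mixedPolicyMatrix φ μ)) *ᵥ q ≤ c := by
  rw [sub_mulVec, one_mulVec, smul_mulVec, ← mulVec_mulVec, sub_le_iff_le_add]
  calc q ≤ c + β • P *ᵥ stateMin q := hq
    _ ≤ c + β • P *ᵥ (mixedPolicyMatrix φ μ *ᵥ q) := by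
        gcongr
        exact mulVec_le_mulVec_of_nonneg hP0 (stateMin_le_mixedPolicyMatrix_mulVec φ hμ0 hμ1 q)

end Policy

theorem stmt12_general {E X U ι : Type*} [NormedAddCommGroup E] [NormedSpace ℝ E]
    [Fintype X] [Fintype U] [DecidableEq X] [DecidableEq U] [Fintype ι]
    {P : Matrix (X × U) X ℝ} (hP0 : ∀ p x, 0 ≤ P p x) (hP1 : ∀ p, ∑ x, P p x ≤ 1)
    {β : ℝ} (hβ : β ∈ Set.Ico 0 1)
    (φ : ι → X → U) {μ : ι → ℝ} (hμ0 : ∀ i, 0 ≤ μ i) (hμ1 : ∑ i, μ i = 1)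
    {c q : E → X × U → ℝ} {t₀ : E}
    (hq : ∀ᶠ t in nhds t₀, q t ≤ c t + β • P *ᵥ stateMin (q t))
    {c' q' : E →L[ℝ] X × U → ℝ} (hc' : HasFDerivAt c c' t₀) (hq' : HasFDerivAt q q' t₀)
    (hμeq : (∑ i, μ i • (1 - β • (P * policyMatrix (φ i))))⁻¹ *ᵥ c t₀ = q t₀) (v : E) :
    q' v = (∑ i, μ i • (1 - β • (P * policyMatrix (φ i))))⁻¹ *ᵥ c' v := by
  rw [sum_smul_one_sub_smul_mul_policyMatrix P β φ hμ1] at hμeq ⊢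
  have hunit : IsUnit (1 - β • (P * mixedPolicyMatrix φ μ)) :=
    isUnit_one_sub_smul_mul_mixedPolicyMatrix φ hP0 hP1
      ((abs_of_nonneg hβ.1).trans_lt hβ.2) hμ0 hμ1
  refine hasFDerivAt_apply_eq_inv_mulVec hunit hc' hq' ?_ hμeq v
  filter_upwards [hq] with t ht
  exact one_sub_smul_mul_mixedPolicyMatrix_mulVec_le φ hP0 hβ.1 hμ0 hμ1 ht

/-- Chain rule along the Zap-Q ODE: if `q_t = Q(c_t)`, both are differentiable at
`t₀`, and `μ` is a pmf over policies with `∂Q_μ c_{t₀} = q_{t₀}`, then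
`q'(t₀) = ∂Q_μ c'(t₀)`. -/
theorem stmt12 {X U : Type*} [Fintype X] [Fintype U] [Nonempty X] [Nonempty U]
    [DecidableEq X] [DecidableEq U]
    (P : X × U → X → ℝ) (hP0 : ∀ p x', 0 ≤ P p x') (hP1 : ∀ p, ∑ x', P p x' = 1)
    (β : ℝ) (hβ : β ∈ Set.Ioo (0 : ℝ) 1)
    (ℓ : ℕ) (e : Fin ℓ ≃ (X → U))
    (Sm : (X → U) → Matrix X (X × U) ℝ)
    (hSm : ∀ (φ : X → U) (x : X) (p : X × U),
      Sm φ x p = if p.1 = x ∧ p.2 = φ x then 1 else 0)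
    (Pm : Matrix (X × U) X ℝ) (hPm : ∀ p x', Pm p x' = P p x')
    (μ : Fin ℓ → ℝ) (hμ0 : ∀ i, 0 ≤ μ i) (hμ1 : ∑ i, μ i = 1)
    (c q : ℝ → X × U → ℝ)
    (hq : ∀ t p, q t p = c t p + β * ∑ x', P p x' * ⨅ u' : U, q t (x', u'))
    (t₀ : ℝ) (c' q' : X × U → ℝ)
    (hc' : HasDerivAt c c' t₀) (hq' : HasDerivAt q q' t₀)
    (hμeq : ((∑ i, μ i • ((1 : Matrix (X × U) (X × U) ℝ) - β • (Pm * Sm (e i))))⁻¹).mulVec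
        (c t₀) = q t₀) :
    q' = ((∑ i, μ i • ((1 : Matrix (X × U) (X × U) ℝ) - β • (Pm * Sm (e i))))⁻¹).mulVec c' := by
  obtain rfl : Pm = P := Matrix.ext hPm
  obtain rfl : Sm = policyMatrix := funext fun φ => Matrix.ext (hSm φ)
  simpa using stmt12_general hP0 (fun p => (hP1 p).le) (Set.Ioo_subset_Ico_self hβ) e hμ0 hμ1
    (.of_forall fun t p => (hq t p).le) hc'.hasFDerivAt hq'.hasFDerivAt hμeq 1
end

section
/- Let X and U be finite nonempty sets, P a matrix with rows indexed by X×U and columns by X having nonnegative entries and each row summing to 1, β ∈ (0,1), and c̄ : X×U → ℝ. Let c : [0,∞) → ℝ^{X×U} be differentiable and satisfy the ODE c'_t = −c_t + c̄ for all t ≥ 0, and set q_t := Q(c_t). Then for every t ≥ 0, max_{(x,u)} |q_t(x,u) − Q(c̄)(x,u)| ≤ (1/(1−β)) e^{−t} max_{(x,u)} |c_0(x,u) − c̄(x,u)|. In particular the ODE is exponentially asymptotically stable and q_t converges to Q* := Q(c̄) as t → ∞. -/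
open Filter Topology

/-!
Write `T q` for the discounted expected minimum of `q`, so that `q = Q(ς)` means `q = ς + T q`.
Minimising over actions is 1-Lipschitz and averaging over next states does not increase the sup
norm, so `T` is a `β`-contraction. Subtracting the equations for `Q(ς₁)` and `Q(ς₂)` then shows
that `Q` is `1 / (1 - β)`-Lipschitz. Along the ODE the error `c_t - c̄` is exactly
`e^{-t} (c_0 - c̄)`, and `Q` carries this decay over to `q_t - Q*`.
-/

open scoped NNReal

theorem pi_norm_eq_iSup_norm {ι : Type*} [Fintype ι] {E : ι → Type*}
    [∀ i, SeminormedAddCommGroup (E i)] (f : ∀ i, E i) : ‖f‖ = ⨆ i, ‖f i‖ := by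
  have hbdd : BddAbove (Set.range fun i => ‖f i‖) := (Set.finite_range _).bddAbove
  refine le_antisymm ?_ (Real.iSup_le (norm_le_pi_norm f) (norm_nonneg f))
  exact (pi_norm_le_iff_of_nonneg (Real.iSup_nonneg fun i => norm_nonneg _)).mpr (le_ciSup hbdd)

theorem ciInf_le_ciInf_add {ι : Sort*} [Nonempty ι] {f g : ι → ℝ} {M : ℝ}
    (hf : BddBelow (Set.range f)) (h : ∀ i, f i ≤ g i + M) : ⨅ i, f i ≤ (⨅ i, g i) + M :=
  sub_le_iff_le_add.mp <| le_ciInf fun i => sub_le_iff_le_add.mpr ((ciInf_le hf i).trans (h i))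

theorem abs_ciInf_sub_ciInf_le {ι : Sort*} [Finite ι] [Nonempty ι] {f g : ι → ℝ} {M : ℝ}
    (h : ∀ i, |f i - g i| ≤ M) : |(⨅ i, f i) - ⨅ i, g i| ≤ M :=
  abs_sub_le_iff.mpr
    ⟨sub_le_iff_le_add'.mpr <| ciInf_le_ciInf_add (Set.finite_range f).bddBelow fun i =>
        sub_le_iff_le_add'.mp (abs_sub_le_iff.mp (h i)).1,
      sub_le_iff_le_add'.mpr <| ciInf_le_ciInf_add (Set.finite_range g).bddBelow fun i =>
        sub_le_iff_le_add'.mp (abs_sub_le_iff.mp (h i)).2⟩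

theorem norm_sum_smul_le_of_sum_eq_one {ι E : Type*} [Fintype ι] [SeminormedAddCommGroup E]
    [NormedSpace ℝ E] {w : ι → ℝ} {v : ι → E} {M : ℝ} (hw0 : ∀ i, 0 ≤ w i)
    (hw1 : ∑ i, w i = 1) (hv : ∀ i, ‖v i‖ ≤ M) : ‖∑ i, w i • v i‖ ≤ M :=
  mem_closedBall_zero_iff.mp <| (convex_closedBall 0 M).sum_mem (fun i _ => hw0 i) hw1
    fun i _ => mem_closedBall_zero_iff.mpr (hv i)

/-- The nonlinear part `T` of the dynamic programming equation `q = ς + T q` defining `q = Q(ς)`: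
the discounted expected minimum, over the next action, of `q` at the next state. -/
noncomputable def discountedMin {X U : Type*} [Fintype X] (β : ℝ) (P : X × U → X → ℝ)
    (q : X × U → ℝ) : X × U → ℝ :=
  fun p => β * ∑ x', P p x' * ⨅ u', q (x', u')

theorem lipschitzWith_discountedMin {X U : Type*} [Fintype X] [Fintype U] [Nonempty U] {β : ℝ≥0}
    {P : X × U → X → ℝ} (hP0 : ∀ p x', 0 ≤ P p x') (hP1 : ∀ p, ∑ x', P p x' = 1) :
    LipschitzWith β (discountedMin β P) := by
  refine LipschitzWith.of_dist_le_mul fun q₁ q₂ => ?_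
  have hmin : ∀ x', ‖(⨅ u', q₁ (x', u')) - ⨅ u', q₂ (x', u')‖ ≤ dist q₁ q₂ := fun x' =>
    abs_ciInf_sub_ciInf_le fun u' => dist_le_pi_dist q₁ q₂ (x', u')
  refine (dist_pi_le_iff (by positivity)).mpr fun p => ?_
  calc dist (discountedMin β P q₁ p) (discountedMin β P q₂ p)
      = β * ‖∑ x', P p x' • ((⨅ u', q₁ (x', u')) - ⨅ u', q₂ (x', u'))‖ := by
        simp only [discountedMin, dist_eq_norm, ← mul_sub, ← Finset.sum_sub_distrib, norm_mul,
          NNReal.norm_eq, smul_eq_mul]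
    _ ≤ β * dist q₁ q₂ := by
        grw [norm_sum_smul_le_of_sum_eq_one (hP0 p) (hP1 p) hmin]

section ContractionAndDecay

variable {E : Type*} [NormedAddCommGroup E]

theorem norm_sub_le_of_eq_add_contractingWith {T : E → E} {K : ℝ≥0} (hT : ContractingWith K T)
    {s₁ s₂ q₁ q₂ : E} (hq₁ : q₁ = s₁ + T q₁) (hq₂ : q₂ = s₂ + T q₂) :
    ‖q₁ - q₂‖ ≤ 1 / (1 - K) * ‖s₁ - s₂‖ := by
  have hself : ‖q₁ - q₂‖ ≤ ‖s₁ - s₂‖ + K * ‖q₁ - q₂‖ :=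
    calc ‖q₁ - q₂‖ = ‖(s₁ - s₂) + (T q₁ - T q₂)‖ := by
          rw [sub_add_sub_comm, ← hq₁, ← hq₂]
      _ ≤ ‖s₁ - s₂‖ + ‖T q₁ - T q₂‖ := norm_add_le _ _
      _ ≤ ‖s₁ - s₂‖ + K * ‖q₁ - q₂‖ := by grw [hT.toLipschitzWith.norm_sub_le]
  rw [one_div_mul_eq_div, le_div_iff₀ hT.one_sub_K_pos]
  linarith

variable [NormedSpace ℝ E]

theorem eq_exp_smul_of_hasDerivWithinAt_smul {f : ℝ → E} {k : ℝ}
    (hf : ∀ t, 0 ≤ t → HasDerivWithinAt f (k • f t) (Set.Ici 0) t) {t : ℝ} (ht : 0 ≤ t) :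
    f t = Real.exp (k * t) • f 0 := by
  have hderiv : ∀ s, 0 ≤ s →
      HasDerivWithinAt (fun s => Real.exp (-(k * s)) • f s) 0 (Set.Ici 0) s := by
    intro s hs
    have hexp : HasDerivAt (fun s => Real.exp (-(k * s))) (Real.exp (-(k * s)) * -k) s := by
      simpa using ((hasDerivAt_id s).const_mul k).neg.exp
    exact (hexp.hasDerivWithinAt.smul (hf s hs)).congr_deriv (by module)
  have hconst : Real.exp (-(k * t)) • f t = f 0 := by
    simpa using constant_of_has_deriv_right_zero
      (fun s hs => (hderiv s hs.1).continuousWithinAt.mono Set.Icc_subset_Ici_self)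
      (fun s hs => (hderiv s hs.1).mono (Set.Ici_subset_Ici.mpr hs.1)) t ⟨ht, le_rfl⟩
  rw [← hconst, smul_smul, ← Real.exp_add, add_neg_cancel, Real.exp_zero, one_smul]

theorem sub_eq_exp_neg_smul_of_hasDerivWithinAt {c : ℝ → E} {cbar : E}
    (hode : ∀ t, 0 ≤ t → HasDerivWithinAt c (-(c t) + cbar) (Set.Ici 0) t) {t : ℝ}
    (ht : 0 ≤ t) : c t - cbar = Real.exp (-t) • (c 0 - cbar) := by
  simpa only [neg_one_mul] using
    eq_exp_smul_of_hasDerivWithinAt_smul (f := fun t => c t - cbar) (k := -1)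
      (fun s hs => ((hode s hs).sub_const cbar).congr_deriv (by module)) ht

theorem stmt13_general {T : E → E} {K : ℝ≥0} (hT : ContractingWith K T) {cbar : E} {c : ℝ → E}
    (hode : ∀ t, 0 ≤ t → HasDerivWithinAt c (-(c t) + cbar) (Set.Ici 0) t) {q : ℝ → E}
    (hq : ∀ t, 0 ≤ t → q t = c t + T (q t)) {Qstar : E} (hQstar : Qstar = cbar + T Qstar) :
    (∀ t, 0 ≤ t → ‖q t - Qstar‖ ≤ 1 / (1 - K) * Real.exp (-t) * ‖c 0 - cbar‖) ∧
      Tendsto q atTop (𝓝 Qstar) := by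
  have hbound : ∀ t, 0 ≤ t →
      ‖q t - Qstar‖ ≤ 1 / (1 - K) * Real.exp (-t) * ‖c 0 - cbar‖ := fun t ht =>
    calc ‖q t - Qstar‖ ≤ 1 / (1 - K) * ‖c t - cbar‖ :=
          norm_sub_le_of_eq_add_contractingWith hT (hq t ht) hQstar
      _ = 1 / (1 - K) * Real.exp (-t) * ‖c 0 - cbar‖ := by
          rw [sub_eq_exp_neg_smul_of_hasDerivWithinAt hode ht, norm_smul, Real.norm_eq_abs,
            Real.abs_exp, mul_assoc]
  have hlim : Tendsto (fun t => 1 / (1 - K) * Real.exp (-t) * ‖c 0 - cbar‖) atTop (𝓝 0) := by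
    simpa only [mul_zero, zero_mul] using
      (Real.tendsto_exp_neg_atTop_nhds_zero.const_mul (1 / (1 - K : ℝ))).mul_const ‖c 0 - cbar‖
  exact ⟨hbound, tendsto_iff_norm_sub_tendsto_zero.mpr <| squeeze_zero'
    (.of_forall fun _ => norm_nonneg _) ((eventually_ge_atTop 0).mono hbound) hlim⟩

end ContractionAndDecay

/-- Exponential asymptotic stability of the Zap-Q ODE `ċ_t = -c_t + c̄`:
`‖q_t - Q*‖_∞ ≤ (1-β)⁻¹ e^{-t} ‖c_0 - c̄‖_∞`, where `q_t = Q(c_t)`, and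
consequently `q_t → Q* = Q(c̄)`. -/
theorem stmt13 {X U : Type*} [Fintype X] [Fintype U] [Nonempty X] [Nonempty U]
    (P : X × U → X → ℝ) (hP0 : ∀ p x', 0 ≤ P p x') (hP1 : ∀ p, ∑ x', P p x' = 1)
    (β : ℝ) (hβ : β ∈ Set.Ioo (0 : ℝ) 1)
    (cbar : X × U → ℝ)
    (c : ℝ → X × U → ℝ)
    (hode : ∀ t : ℝ, 0 ≤ t → HasDerivAt c (-(c t) + cbar) t)
    (q : ℝ → X × U → ℝ)
    (hq : ∀ t : ℝ, 0 ≤ t →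
      ∀ p, q t p = c t p + β * ∑ x', P p x' * ⨅ u' : U, q t (x', u'))
    (Qstar : X × U → ℝ)
    (hQstar : ∀ p, Qstar p = cbar p + β * ∑ x', P p x' * ⨅ u' : U, Qstar (x', u')) :
    (∀ t : ℝ, 0 ≤ t → ∀ p, |q t p - Qstar p| ≤
      (1 / (1 - β)) * Real.exp (-t) * ⨆ p' : X × U, |c 0 p' - cbar p'|) ∧
    Tendsto q atTop (𝓝 Qstar) := by
  lift β to ℝ≥0 using hβ.1.le
  obtain ⟨hbound, hlim⟩ := stmt13_general ⟨hβ.2, lipschitzWith_discountedMin hP0 hP1⟩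
    (fun t ht => (hode t ht).hasDerivWithinAt) (fun t ht => funext (hq t ht)) (funext hQstar)
  exact ⟨fun t ht p => (norm_le_pi_norm (q t - Qstar) p).trans
    (pi_norm_eq_iSup_norm (c 0 - cbar) ▸ hbound t ht), hlim⟩
end

section
/- Fix T > 0, l > 0 and b > 0. Every Lipschitz function g : ℝ → ℝ is differentiable Lebesgue-almost everywhere; write g' for its a.e. derivative, and for f, g : ℝ → ℝ with g Lipschitz and f bounded measurable define C_T(f,g) := ∫_0^T f(t) g'(t) dt. Then: (i) if g is l-Lipschitz and f₁, f₂ are measurable and bounded on [0,T], then |C_T(f₁,g) − C_T(f₂,g)| ≤ T·l·sup_{t∈[0,T]} |f₁(t) − f₂(t)|; (ii) if f is l-Lipschitz with |f(t)| ≤ b for t ∈ [0,T], and g₁, g₂ are l-Lipschitz, then |C_T(f,g₁) − C_T(f,g₂)| ≤ (2b + T·l)·sup_{t∈[0,T]} |g₁(t) − g₂(t)|. -/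
open MeasureTheory intervalIntegral

/-!
`C(f, g) = ∫ₐᵇ f g'` is bilinear, so it suffices to bound a single value. If `g` is `K`-Lipschitz
then `|g'| ≤ K` almost everywhere, which bounds `C(f, g)` by `|b - a| K sup |f|`. If instead `f` is
`K`-Lipschitz, integration by parts moves the derivative onto `f`: the boundary terms contribute
at most `(|f a| + |f b|) sup |g|`, and the remaining integral is `C(g, f)`, bounded as before.
-/

section

open Set
open scoped NNReal

variable {a b : ℝ}

section Normed

variable {E : Type*} [NormedAddCommGroup E]

theorem ae_norm_deriv_le_of_lipschitzOnWith_uIcc [NormedSpace ℝ E] {g : ℝ → E} {K : ℝ≥0}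
    (hg : LipschitzOnWith K g (uIcc a b)) :
    ∀ᵐ t, t ∈ uIoc a b → ‖deriv g t‖ ≤ K := by
  filter_upwards [Measure.ae_ne volume (a ⊔ b)] with t ht_ne ht
  exact norm_deriv_le_of_lipschitzOn (Icc_mem_nhds ht.1 (ht.2.lt_of_ne ht_ne)) hg

theorem intervalIntegrable_of_exists_norm_le_Icc {μ : Measure ℝ} [IsLocallyFiniteMeasure μ]
    {f : ℝ → E} (hab : a ≤ b) (hf : AEStronglyMeasurable f (μ.restrict (Ioc a b)))
    (hbdd : ∃ M : ℝ, ∀ t ∈ Icc a b, ‖f t‖ ≤ M) :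
    IntervalIntegrable f μ a b := by
  obtain ⟨M, hM⟩ := hbdd
  refine (intervalIntegrable_iff_integrableOn_Ioc_of_le hab).2 <|
    .of_bound measure_Ioc_lt_top hf M ?_
  filter_upwards [ae_restrict_mem measurableSet_Ioc] with t ht using hM t (Ioc_subset_Icc_self ht)

theorem bddAbove_range_norm_sub {α : Type*} {s : Set α} {f₁ f₂ : α → E}
    (h₁ : ∃ M : ℝ, ∀ t ∈ s, ‖f₁ t‖ ≤ M) (h₂ : ∃ M : ℝ, ∀ t ∈ s, ‖f₂ t‖ ≤ M) :
    BddAbove (range fun t : s => ‖f₁ t - f₂ t‖) := by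
  obtain ⟨M₁, hM₁⟩ := h₁
  obtain ⟨M₂, hM₂⟩ := h₂
  exact ⟨M₁ + M₂, forall_mem_range.2 fun t => norm_sub_le_of_le (hM₁ t t.2) (hM₂ t t.2)⟩

end Normed

/-- The functional `C(f, g) = ∫ₐᵇ f g'`; the paper's `C_T` is the case `a = 0`, `b = T`. Where `g`
is not differentiable `deriv g` is `0`, which is harmless when `g` is differentiable almost
everywhere. -/
noncomputable def derivPairing (a b : ℝ) (f g : ℝ → ℝ) : ℝ :=
  ∫ t in a..b, f t * deriv g t

variable {f f₁ f₂ g g₁ g₂ : ℝ → ℝ} {K : ℝ≥0} {S : ℝ}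

theorem intervalIntegrable_mul_deriv_of_lipschitzOnWith
    (hf : IntervalIntegrable f volume a b) (hg : LipschitzOnWith K g (uIcc a b)) :
    IntervalIntegrable (fun t => f t * deriv g t) volume a b :=
  intervalIntegrable_iff.2 <| hf.def'.mul_bdd (c := K) (measurable_deriv g).aestronglyMeasurable <|
    (ae_restrict_iff' measurableSet_uIoc).2 (ae_norm_deriv_le_of_lipschitzOnWith_uIcc hg)

theorem derivPairing_sub_left (hf₁ : IntervalIntegrable f₁ volume a b)
    (hf₂ : IntervalIntegrable f₂ volume a b) (hg : LipschitzOnWith K g (uIcc a b)) :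
    derivPairing a b (f₁ - f₂) g = derivPairing a b f₁ g - derivPairing a b f₂ g := by
  simp only [derivPairing, Pi.sub_apply, sub_mul]
  exact integral_sub (intervalIntegrable_mul_deriv_of_lipschitzOnWith hf₁ hg)
    (intervalIntegrable_mul_deriv_of_lipschitzOnWith hf₂ hg)

theorem derivPairing_sub_right (hf : ContinuousOn f (uIcc a b))
    (hg₁ : AbsolutelyContinuousOnInterval g₁ a b) (hg₂ : AbsolutelyContinuousOnInterval g₂ a b) :
    derivPairing a b f (g₁ - g₂) = derivPairing a b f g₁ - derivPairing a b f g₂ := by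
  have h_deriv : ∀ᵐ t, t ∈ uIoc a b →
      f t * deriv (g₁ - g₂) t = f t * deriv g₁ t - f t * deriv g₂ t := by
    filter_upwards [hg₁.boundedVariationOn.ae_differentiableAt_of_mem_uIcc,
      hg₂.boundedVariationOn.ae_differentiableAt_of_mem_uIcc] with t h₁ h₂ ht
    have ht' := uIoc_subset_uIcc ht
    rw [deriv_sub (h₁ ht') (h₂ ht'), mul_sub]
  exact (integral_congr_ae h_deriv).trans <|
    integral_sub (hg₁.intervalIntegrable_deriv.continuousOn_mul hf)
      (hg₂.intervalIntegrable_deriv.continuousOn_mul hf)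

theorem abs_derivPairing_le_of_lipschitzOnWith_right
    (hf : ∀ t ∈ uIcc a b, |f t| ≤ S) (hg : LipschitzOnWith K g (uIcc a b)) :
    |derivPairing a b f g| ≤ |b - a| * K * S := by
  have h_bound : ∀ᵐ t, t ∈ uIoc a b → ‖f t * deriv g t‖ ≤ S * K := by
    filter_upwards [ae_norm_deriv_le_of_lipschitzOnWith_uIcc hg] with t h_deriv ht
    exact norm_mul_le_of_le (hf t (uIoc_subset_uIcc ht)) (h_deriv ht)
  calc |derivPairing a b f g| ≤ S * K * |b - a| := norm_integral_le_of_norm_le_const_ae h_bound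
    _ = |b - a| * K * S := by ring

theorem derivPairing_eq_sub_derivPairing_swap (hf : AbsolutelyContinuousOnInterval f a b)
    (hg : AbsolutelyContinuousOnInterval g a b) :
    derivPairing a b f g = f b * g b - f a * g a - derivPairing a b g f := by
  simp only [derivPairing, hf.integral_mul_deriv_eq_deriv_mul hg, mul_comm]

theorem abs_derivPairing_le_of_lipschitzOnWith_left (hf : LipschitzOnWith K f (uIcc a b))
    (hg : AbsolutelyContinuousOnInterval g a b) (hgS : ∀ t ∈ uIcc a b, |g t| ≤ S) :
    |derivPairing a b f g| ≤ (|f a| + |f b| + |b - a| * K) * S := by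
  have h_endpoint {t : ℝ} (ht : t ∈ uIcc a b) : |f t * g t| ≤ |f t| * S := by
    rw [abs_mul]
    exact mul_le_mul_of_nonneg_left (hgS t ht) (abs_nonneg _)
  calc |derivPairing a b f g|
      = |f b * g b - f a * g a - derivPairing a b g f| := by
        rw [derivPairing_eq_sub_derivPairing_swap hf.absolutelyContinuousOnInterval hg]
    _ ≤ |f b| * S + |f a| * S + |b - a| * K * S :=
        (abs_sub _ _).trans <| add_le_add
          ((abs_sub _ _).trans <| add_le_add (h_endpoint right_mem_uIcc) (h_endpoint left_mem_uIcc))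
          (abs_derivPairing_le_of_lipschitzOnWith_right hgS hf)
    _ = (|f a| + |f b| + |b - a| * K) * S := by ring

theorem abs_derivPairing_sub_left_le (hf₁ : IntervalIntegrable f₁ volume a b)
    (hf₂ : IntervalIntegrable f₂ volume a b) (hg : LipschitzOnWith K g (uIcc a b))
    (hbdd : BddAbove (range fun t : uIcc a b => |f₁ t - f₂ t|)) :
    |derivPairing a b f₁ g - derivPairing a b f₂ g| ≤
      |b - a| * K * ⨆ t : uIcc a b, |f₁ t - f₂ t| := by
  rw [← derivPairing_sub_left hf₁ hf₂ hg]
  exact abs_derivPairing_le_of_lipschitzOnWith_right (fun t ht => le_ciSup hbdd ⟨t, ht⟩) hg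

theorem abs_derivPairing_sub_right_le (hf : LipschitzOnWith K f (uIcc a b))
    (hg₁ : AbsolutelyContinuousOnInterval g₁ a b) (hg₂ : AbsolutelyContinuousOnInterval g₂ a b) :
    |derivPairing a b f g₁ - derivPairing a b f g₂| ≤
      (|f a| + |f b| + |b - a| * K) * ⨆ t : uIcc a b, |g₁ t - g₂ t| := by
  have hbdd : BddAbove (range fun t : uIcc a b => |g₁ t - g₂ t|) :=
    bddAbove_range_norm_sub hg₁.exists_bound hg₂.exists_bound
  rw [← derivPairing_sub_right hf.continuousOn hg₁ hg₂]
  exact abs_derivPairing_le_of_lipschitzOnWith_left hf (hg₁.sub hg₂)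
    fun t ht => le_ciSup hbdd ⟨t, ht⟩

theorem stmt16_general {T : ℝ} (hT : 0 ≤ T) (K : ℝ≥0) (M : ℝ) :
    (∀ g : ℝ → ℝ, LocallyBoundedVariationOn g univ → ∀ᵐ t, DifferentiableAt ℝ g t) ∧
    (∀ g f₁ f₂ : ℝ → ℝ, LipschitzOnWith K g (Icc 0 T) →
      IntervalIntegrable f₁ volume 0 T → IntervalIntegrable f₂ volume 0 T →
      BddAbove (range fun t : Icc 0 T => |f₁ t - f₂ t|) →
      |derivPairing 0 T f₁ g - derivPairing 0 T f₂ g| ≤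
        T * K * ⨆ t : Icc 0 T, |f₁ t - f₂ t|) ∧
    (∀ f g₁ g₂ : ℝ → ℝ, LipschitzOnWith K f (Icc 0 T) → |f 0| ≤ M → |f T| ≤ M →
      AbsolutelyContinuousOnInterval g₁ 0 T → AbsolutelyContinuousOnInterval g₂ 0 T →
      |derivPairing 0 T f g₁ - derivPairing 0 T f g₂| ≤
        (2 * M + T * K) * ⨆ t : Icc 0 T, |g₁ t - g₂ t|) := by
  have h_abs : |T - 0| = T := by rw [sub_zero, abs_of_nonneg hT]
  rw [← uIcc_of_le hT]
  refine ⟨fun g hg => hg.ae_differentiableAt, fun g f₁ f₂ hg hf₁ hf₂ hbdd => ?_,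
    fun f g₁ g₂ hf h₀ h_T hg₁ hg₂ => ?_⟩
  · simpa only [h_abs] using abs_derivPairing_sub_left_le hf₁ hf₂ hg hbdd
  · refine (abs_derivPairing_sub_right_le hf hg₁ hg₂).trans ?_
    rw [h_abs]
    exact mul_le_mul_of_nonneg_right (by linarith) (Real.iSup_nonneg fun t => abs_nonneg _)

end

/-- Rademacher's theorem on ℝ, and Lipschitz continuity (in each argument) of the
bilinear functional `C_T(f,g) = ∫_0^T f(t) g'(t) dt` on bounded/Lipschitz classes. -/
theorem stmt16 (T l b : ℝ) (hT : 0 < T) (hl : 0 < l) (hb : 0 < b) :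
    (∀ g : ℝ → ℝ, (∃ K : ℝ, ∀ s t, |g s - g t| ≤ K * |s - t|) →
      ∀ᵐ t ∂(volume : Measure ℝ), DifferentiableAt ℝ g t) ∧
    (∀ g f₁ f₂ : ℝ → ℝ,
      (∀ s t, |g s - g t| ≤ l * |s - t|) →
      Measurable f₁ → Measurable f₂ →
      (∃ M : ℝ, ∀ t ∈ Set.Icc (0 : ℝ) T, |f₁ t| ≤ M) →
      (∃ M : ℝ, ∀ t ∈ Set.Icc (0 : ℝ) T, |f₂ t| ≤ M) →
      |(∫ t in (0 : ℝ)..T, f₁ t * deriv g t) - ∫ t in (0 : ℝ)..T, f₂ t * deriv g t| ≤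
        T * l * ⨆ t : Set.Icc (0 : ℝ) T, |f₁ t.1 - f₂ t.1|) ∧
    (∀ f g₁ g₂ : ℝ → ℝ,
      (∀ s t, |f s - f t| ≤ l * |s - t|) →
      (∀ t ∈ Set.Icc (0 : ℝ) T, |f t| ≤ b) →
      (∀ s t, |g₁ s - g₁ t| ≤ l * |s - t|) →
      (∀ s t, |g₂ s - g₂ t| ≤ l * |s - t|) →
      |(∫ t in (0 : ℝ)..T, f t * deriv g₁ t) - ∫ t in (0 : ℝ)..T, f t * deriv g₂ t| ≤
        (2 * b + T * l) * ⨆ t : Set.Icc (0 : ℝ) T, |g₁ t.1 - g₂ t.1|) := by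
  lift l to NNReal using hl.le
  obtain ⟨h_diff, h_left, h_right⟩ := stmt16_general hT.le l b
  have h_lip {g : ℝ → ℝ} (hg : ∀ s t, |g s - g t| ≤ l * |s - t|) (s : Set ℝ) :
      LipschitzOnWith l g s := (LipschitzWith.of_dist_le_mul hg).lipschitzOnWith
  exact ⟨fun g ⟨K, hg⟩ => h_diff g ((LipschitzWith.of_dist_le' hg).locallyBoundedVariationOn _),
    fun g f₁ f₂ hg hf₁ hf₂ hb₁ hb₂ => h_left g f₁ f₂ (h_lip hg _)
      (intervalIntegrable_of_exists_norm_le_Icc hT.le hf₁.aestronglyMeasurable hb₁)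
      (intervalIntegrable_of_exists_norm_le_Icc hT.le hf₂.aestronglyMeasurable hb₂)
      (bddAbove_range_norm_sub (f₁ := f₁) (f₂ := f₂) hb₁ hb₂),
    fun f g₁ g₂ hf hfb hg₁ hg₂ => h_right f g₁ g₂ (h_lip hf _)
      (hfb 0 (Set.left_mem_Icc.2 hT.le)) (hfb T (Set.right_mem_Icc.2 hT.le))
      (h_lip hg₁ _).absolutelyContinuousOnInterval (h_lip hg₂ _).absolutelyContinuousOnInterval⟩
end

section
/- Let T be a d×d row-stochastic matrix (nonnegative entries, each row summing to 1) that is irreducible (for every pair of indices i, j there exists n ≥ 1 with (Tⁿ)_{ij} > 0), and let ϖ ∈ ℝ^d be its invariant probability vector, ϖᵀ T = ϖᵀ. Then for every m ≥ 1 and every F : {1,…,d} → ℝ^m with Σ_{i=1}^d ϖ_i F(i) = 0, there exists H : {1,…,d} → ℝ^m solving Poisson's equation H(i) − Σ_{j=1}^d T_{ij} H(j) = F(i) for all i. -/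
open Matrix

/-!
By the maximum principle a function harmonic for `T` takes both its maximum and its minimum at any
state that is reachable from everywhere, so it is constant. The correction by `ϖ` in
`A = 1 - T + 1 ϖᵀ` removes exactly these constants: since `ϖᵀ A = ϖᵀ`, a vector killed by `A` is
harmonic and has mean zero, hence vanishes. So `A` is invertible, and `ϖᵀ A⁻¹ = ϖᵀ` gives
`(1 - T) A⁻¹ = 1 - 1 ϖᵀ`; applied to a function of mean zero, `A⁻¹` solves Poisson's equation.
-/

section PoissonEquation

variable {ι R : Type*} [Fintype ι] [DecidableEq ι]

theorem pow_mulVec_eq_self [Semiring R] {T : Matrix ι ι R} {h : ι → R} (hh : T *ᵥ h = h) (n : ℕ) :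
    T ^ n *ᵥ h = h := by
  induction n with
  | zero => rw [pow_zero, one_mulVec]
  | succ n ih => rw [pow_succ, ← mulVec_mulVec, hh, ih]

section MaximumPrinciple

variable [Ring R] [LinearOrder R] [IsStrictOrderedRing R] {T : Matrix ι ι R} {h : ι → R}

theorem eq_of_forall_le_of_le_mulVec_of_pos (hT : T ∈ rowStochastic R ι) {i j : ι}
    (hmax : ∀ k, h k ≤ h i) (hsub : h i ≤ (T *ᵥ h) i) (hij : 0 < T i j) : h j = h i := by
  by_contra hne
  have hlt : (T *ᵥ h) i < ∑ k, T i k * h i :=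
    Finset.sum_lt_sum
      (fun k _ ↦ mul_le_mul_of_nonneg_left (hmax k) (nonneg_of_mem_rowStochastic hT))
      ⟨j, Finset.mem_univ j, mul_lt_mul_of_pos_left (lt_of_le_of_ne (hmax j) hne) hij⟩
  rw [← Finset.sum_mul, sum_row_of_mem_rowStochastic hT, one_mul] at hlt
  exact hsub.not_gt hlt

theorem le_of_mulVec_eq_self_of_reachable (hT : T ∈ rowStochastic R ι) {j : ι}
    (hreach : ∀ i, ∃ n : ℕ, 0 < (T ^ n) i j) (hh : T *ᵥ h = h) (k : ι) : h k ≤ h j := by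
  have : Nonempty ι := ⟨j⟩
  obtain ⟨i, hmax⟩ := Finite.exists_max h
  obtain ⟨n, hn⟩ := hreach i
  have hji : h j = h i := eq_of_forall_le_of_le_mulVec_of_pos (pow_mem hT n) hmax
    (congrFun (pow_mulVec_eq_self hh n) i).ge hn
  exact hji ▸ hmax k

theorem eq_const_of_mulVec_eq_self_of_reachable (hT : T ∈ rowStochastic R ι) {j : ι}
    (hreach : ∀ i, ∃ n : ℕ, 0 < (T ^ n) i j) (hh : T *ᵥ h = h) : h = Function.const ι (h j) := by
  have hneg : T *ᵥ (-h) = -h := by rw [mulVec_neg, hh]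
  funext k
  exact le_antisymm (le_of_mulVec_eq_self_of_reachable hT hreach hh k)
    (neg_le_neg_iff.1 (le_of_mulVec_eq_self_of_reachable hT hreach hneg k))

end MaximumPrinciple

theorem vecMul_one_sub_add_vecMulVec [Ring R] {T : Matrix ι ι R} {ϖ : ι → R}
    (hϖ : ∑ i, ϖ i = 1) (hinv : ϖ ᵥ* T = ϖ) : ϖ ᵥ* (1 - T + vecMulVec 1 ϖ) = ϖ := by
  rw [vecMul_add, vecMul_sub, vecMul_one, hinv, sub_self, zero_add, vecMul_vecMulVec,
    dotProduct_one, hϖ, one_smul]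

/-- The Kemeny–Snell fundamental matrix `(1 - T + 1 ϖᵀ)⁻¹` of a chain with transition matrix `T`
and invariant vector `ϖ`, which serves to invert `1 - T` on functions of mean zero. As an instance
of `Matrix.inv` it is `0` when `1 - T + 1 ϖᵀ` is singular. -/
noncomputable def fundamentalMatrix [CommRing R] (T : Matrix ι ι R) (ϖ : ι → R) : Matrix ι ι R :=
  (1 - T + vecMulVec 1 ϖ)⁻¹

section FundamentalMatrix

variable [Field R] [LinearOrder R] [IsStrictOrderedRing R] {T : Matrix ι ι R} {j : ι} {ϖ : ι → R}

theorem isUnit_one_sub_add_vecMulVec (hT : T ∈ rowStochastic R ι)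
    (hreach : ∀ i, ∃ n : ℕ, 0 < (T ^ n) i j) (hϖ : ∑ i, ϖ i = 1) (hinv : ϖ ᵥ* T = ϖ) :
    IsUnit (1 - T + vecMulVec 1 ϖ) := by
  refine mulVec_injective_iff_isUnit.1 ((injective_iff_map_eq_zero (mulVecLin _)).2 fun h hh ↦ ?_)
  rw [mulVecLin_apply] at hh
  have hmean : ϖ ⬝ᵥ h = 0 := by
    rw [← vecMul_one_sub_add_vecMulVec hϖ hinv, ← dotProduct_mulVec, hh, dotProduct_zero]
  have hharm : T *ᵥ h = h := by
    rw [add_mulVec, sub_mulVec, one_mulVec, vecMulVec_mulVec, hmean, MulOpposite.op_zero,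
      zero_smul, add_zero] at hh
    exact (sub_eq_zero.1 hh).symm
  have hconst := eq_const_of_mulVec_eq_self_of_reachable hT hreach hharm
  have hj : h j = 0 := by
    rw [hconst] at hmean
    simpa only [dotProduct, Function.const_apply, ← Finset.sum_mul, hϖ, one_mul] using hmean
  rw [hconst, hj, Function.const_zero]

theorem one_sub_mul_fundamentalMatrix (hT : T ∈ rowStochastic R ι)
    (hreach : ∀ i, ∃ n : ℕ, 0 < (T ^ n) i j) (hϖ : ∑ i, ϖ i = 1) (hinv : ϖ ᵥ* T = ϖ) :
    (1 - T) * fundamentalMatrix T ϖ = 1 - vecMulVec 1 ϖ := by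
  have hdet := (isUnit_iff_isUnit_det _).1 (isUnit_one_sub_add_vecMulVec hT hreach hϖ hinv)
  have hright : (1 - T + vecMulVec 1 ϖ) * fundamentalMatrix T ϖ = 1 := mul_nonsing_inv _ hdet
  have hfix : ϖ ᵥ* fundamentalMatrix T ϖ = ϖ := by
    calc ϖ ᵥ* fundamentalMatrix T ϖ
        = (ϖ ᵥ* (1 - T + vecMulVec 1 ϖ)) ᵥ* fundamentalMatrix T ϖ := by
          rw [vecMul_one_sub_add_vecMulVec hϖ hinv]
      _ = ϖ := by rw [vecMul_vecMul, hright, vecMul_one]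
  rwa [add_mul, vecMulVec_mul, hfix, ← eq_sub_iff_add_eq] at hright

open scoped Matrix.Module in
theorem stmt18_general {E : Type*} [AddCommGroup E] [Module R E] (hT : T ∈ rowStochastic R ι)
    (hreach : ∀ i, ∃ n : ℕ, 0 < (T ^ n) i j) (hϖ : ∑ i, ϖ i = 1) (hinv : ϖ ᵥ* T = ϖ)
    {F : ι → E} (hF : ∑ i, ϖ i • F i = 0) :
    ∃ H : ι → E, ∀ i, H i - ∑ k, T i k • H k = F i := by
  have hmean : (vecMulVec 1 ϖ : Matrix ι ι R) • F = 0 := by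
    funext i
    simpa only [Module.smul_apply, vecMulVec_apply, Pi.one_apply, Pi.zero_apply, one_mul]
      using hF
  have hsolve : (1 - T) • fundamentalMatrix T ϖ • F = F := by
    rw [smul_smul, one_sub_mul_fundamentalMatrix hT hreach hϖ hinv, sub_smul, one_smul, hmean,
      sub_zero]
  rw [sub_smul, one_smul] at hsolve
  exact ⟨fundamentalMatrix T ϖ • F, congrFun hsolve⟩

end FundamentalMatrix

end PoissonEquation

/-- Solvability of Poisson's equation for zero-mean functions of a finite
irreducible Markov chain. -/
theorem stmt18 {d : ℕ} [NeZero d]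
    (T : Matrix (Fin d) (Fin d) ℝ)
    (hT0 : ∀ i j, 0 ≤ T i j) (hT1 : ∀ i, ∑ j, T i j = 1)
    (hirr : ∀ i j, ∃ n : ℕ, 1 ≤ n ∧ 0 < (T ^ n) i j)
    (ϖ : Fin d → ℝ) (hϖ0 : ∀ i, 0 ≤ ϖ i) (hϖ1 : ∑ i, ϖ i = 1)
    (hinv : Matrix.vecMul ϖ T = ϖ)
    (m : ℕ) (hm : 1 ≤ m) (F : Fin d → Fin m → ℝ)
    (hF : ∑ i, ϖ i • F i = 0) :
    ∃ H : Fin d → Fin m → ℝ, ∀ i, H i - ∑ j, T i j • H j = F i :=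
  stmt18_general (mem_rowStochastic_iff_sum.2 ⟨hT0, hT1⟩)
    (fun i ↦ (hirr i 0).imp fun _ ↦ And.right) hϖ1 hinv hF
end
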